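/- Variance of debiased subsampled OLS (Theorem 4.4, variance part): There exist absolute constants C > 0 and C' > 0 such that the following holds. Let n ≥ p ≥ 1 with n ≥ 3, let X ∈ ℝ^{n×p} have Xᵀ X invertible and satisfy the row-norm condition with exponent α > 0, let y ∈ ℝⁿ, let π be a sampling distribution with π i > 0 and ℓ_i(X) < m · π i for all i, let 0 < δ ≤ n^{−(3+α)}, and assume m ≥ C · θ_max(X) · p · log(p/δ). Then there exists an event ζ ⊆ Ω with P(ζ) ≥ 1 − δ such that (Š(ω) X)ᵀ Š(ω) X is invertible for every ω ∈ ζ and |Var_ζ(β̌) − Δ(X)| ≤ ε · ‖r‖², where ε = C' · (log n / log log n) · √(θ_max(X)³ · p³ / m³). -/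

import Mathlib

/-!
Write `η = θ_max p / m`, so that `ℓ_i ≤ η m π_i` for all `i`.

**Reduction.** Choose `W` with `Wᵀ (Xᵀ X) W = 1` and let `u_i = Wᵀ x_i` be the whitened rows. With
`d_i² = 1 / (m π_i - ℓ_i)` (the debiased weight of row `i`), `a_i = d_i u_i` and `z_i = d_i r_i`,
the excess loss of the debiased estimator is `‖G⁻¹ ∑_s z_s a_s‖²`, where `G = ∑_s a_s a_sᵀ` runs
over the draws (`loss_betaCheck`). The weights satisfy `‖a_i‖² = O(η)` and `m π_i d_i² = 1 + O(η)`,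
so `G` has mean close to the identity, and the normal equations `∑ r_i u_i = 0` survive, up to a
relative error `η`, as cancellation in averages of `z_i a_i`. The structure `WhitenedModel` records
exactly what is used, with `ε = 2 η`.

**Good event.** Split the draws into three blocks by index modulo 3, and let `ζ` be the event that
the Gram matrix of each block alone is at least `1/10`. Its probability comes from a lower-tail
bound (`expec_badInd_le`) using the potential `tr (1 + ∑ a_s a_sᵀ)^{-q}` with `q ≍ 1/η`: adding one
random rank-one term decreases it on average by a factor `1 - c q / m`, down to a negligible floor,
by Sherman–Morrison and a Chebyshev inequality for the spectral moments. This gives failure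
probability `O(p e^{-c/η})`, which is at most `δ` and also `O(η²)`.

**Variance.** Expand the square into pair terms `z_s z_t ⟨G⁻¹ a_s, G⁻¹ a_t⟩`. Any two draws leave
at least one block untouched; up to the failure probability the indicator of `ζ` may be replaced
by that of this block, which is independent of both draws, and still bounds the remaining Gram
matrix from below. The two draws can then be averaged with everything else frozen.
* For `s ≠ t` the rank-two update of the resolvent and the cancellation of `z_i a_i` make the
  average `O(ε² ‖r‖² / m²)` (`WhitenedModel.offdiag`), and there are at most `m²` such pairs.
* For `s = t` the term equals `z² ‖a‖²` up to a relative error governed by `‖G u - u‖`, whose mean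
  square is `O(ε) ‖u‖²` (`WhitenedModel.mean_sq_gramOn`); this is where the rate `ε^{3/2}` arises.

The resulting main term `m ∑ π_i z_i² ‖a_i‖²` differs from `Δ(X) = ∑ r_i² ℓ_i / (m π_i)` by
`O(η²) ‖r‖²`, and dividing by `P(ζ)` costs only the failure probability. The total error is
`O(η^{3/2}) ‖r‖²`, and `log n / log log n ≥ 1`.
-/

open Matrix Finset

noncomputable section

/-- Probability of the i.i.d. sample `ω` of `m` draws from the sampling
distribution `π` (pmf of the product measure on `Ω = Fin m → Fin n`). -/
def samplingP {n : ℕ} (π : Fin n → ℝ) {m : ℕ} (ω : Fin m → Fin n) : ℝ :=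
  ∏ s, π (ω s)

/-- The sampling matrix `S(ω) ∈ ℝ^{m×n}` with `S(ω)_{s,j} = 1/√(m π_{ω s})` if
`j = ω s` and `0` otherwise. -/
def samplingS {n : ℕ} (π : Fin n → ℝ) {m : ℕ} (ω : Fin m → Fin n) :
    Matrix (Fin m) (Fin n) ℝ :=
  Matrix.of fun s j => if j = ω s then 1 / Real.sqrt (m * π (ω s)) else 0

/-- The `i`-th leverage score `ℓ_i(X) = x_iᵀ (Xᵀ X)⁻¹ x_i`. -/
def lev {n p : ℕ} (X : Matrix (Fin n) (Fin p) ℝ) (i : Fin n) : ℝ :=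
  X i ⬝ᵥ ((Xᵀ * X)⁻¹ *ᵥ X i)

/-- Maximum importance sampling approximation factor
`θ_max(X) = max_i ℓ_i(X)/(p π_i)`. -/
def thetaMax {n p : ℕ} (X : Matrix (Fin n) (Fin p) ℝ) (π : Fin n → ℝ) : ℝ :=
  ⨆ i, lev X i / (p * π i)

/-- Probability of an event `ζ` relative to the pmf `P`. -/
def eventProb {Ω : Type*} (P : Ω → ℝ) (ζ : Finset Ω) : ℝ :=
  ∑ ω ∈ ζ, P ω

/-- Conditional expectation `E_ζ[f] = P(ζ)⁻¹ ∑_{ω ∈ ζ} P(ω) f(ω)`. -/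
def condExp {Ω V : Type*} [AddCommMonoid V] [Module ℝ V]
    (P : Ω → ℝ) (ζ : Finset Ω) (f : Ω → V) : V :=
  (eventProb P ζ)⁻¹ • ∑ ω ∈ ζ, P ω • f ω

/-- Frobenius norm `‖A‖_F = √(trace (Aᵀ A))`. -/
def frobNorm {k l : ℕ} (A : Matrix (Fin k) (Fin l) ℝ) : ℝ :=
  Real.sqrt ((Aᵀ * A).trace)

/-- Loewner order: `A ⪯ B` iff `B − A` is positive semidefinite. -/
def loewnerLE {k : ℕ} (A B : Matrix (Fin k) (Fin k) ℝ) : Prop :=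
  (B - A).PosSemidef

/-- Debiased sampling matrix
`Š(ω) = diag(1/√(1 − ℓ_{ω s}(X)/(m π_{ω s})))_{s} · S(ω)`. -/
def samplingSdeb {n p : ℕ} (X : Matrix (Fin n) (Fin p) ℝ) (π : Fin n → ℝ) {m : ℕ}
    (ω : Fin m → Fin n) : Matrix (Fin m) (Fin n) ℝ :=
  Matrix.diagonal (fun s => 1 / Real.sqrt (1 - lev X (ω s) / (m * π (ω s)))) *
    samplingS π ω

/-- Least-squares loss `L(β) = ‖y − X β‖²`. -/
def lossL {n p : ℕ} (X : Matrix (Fin n) (Fin p) ℝ) (y : Fin n → ℝ)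
    (β : Fin p → ℝ) : ℝ :=
  (y - X *ᵥ β) ⬝ᵥ (y - X *ᵥ β)

/-- OLS solution `β_OLS = (Xᵀ X)⁻¹ Xᵀ y`. -/
def olsSol {n p : ℕ} (X : Matrix (Fin n) (Fin p) ℝ) (y : Fin n → ℝ) : Fin p → ℝ :=
  (Xᵀ * X)⁻¹ *ᵥ (Xᵀ *ᵥ y)

/-- OLS residual `r = y − X β_OLS`. -/
def olsResid {n p : ℕ} (X : Matrix (Fin n) (Fin p) ℝ) (y : Fin n → ℝ) : Fin n → ℝ :=
  y - X *ᵥ olsSol X y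

/-- Subsampled OLS estimator `β̃(ω) = ((S(ω) X)ᵀ S(ω) X)⁻¹ (S(ω) X)ᵀ S(ω) y`. -/
def betaTilde {n p : ℕ} (X : Matrix (Fin n) (Fin p) ℝ) (y : Fin n → ℝ)
    (π : Fin n → ℝ) {m : ℕ} (ω : Fin m → Fin n) : Fin p → ℝ :=
  ((samplingS π ω * X)ᵀ * (samplingS π ω * X))⁻¹ *ᵥ
    ((samplingS π ω * X)ᵀ *ᵥ (samplingS π ω *ᵥ y))

/-- `Δ(X) = rᵀ diag(ℓ_i(X)/(m π_i)) r`. -/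
def deltaOLS {n p : ℕ} (X : Matrix (Fin n) (Fin p) ℝ) (y : Fin n → ℝ)
    (π : Fin n → ℝ) (m : ℕ) : ℝ :=
  olsResid X y ⬝ᵥ
    (Matrix.diagonal (fun i => lev X i / (m * π i)) *ᵥ olsResid X y)

/-- Debiased subsampled OLS estimator
`β̌(ω) = ((Š(ω) X)ᵀ Š(ω) X)⁻¹ (Š(ω) X)ᵀ Š(ω) y`. -/
def betaCheck {n p : ℕ} (X : Matrix (Fin n) (Fin p) ℝ) (y : Fin n → ℝ)
    (π : Fin n → ℝ) {m : ℕ} (ω : Fin m → Fin n) : Fin p → ℝ :=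
  ((samplingSdeb X π ω * X)ᵀ * (samplingSdeb X π ω * X))⁻¹ *ᵥ
    ((samplingSdeb X π ω * X)ᵀ *ᵥ (samplingSdeb X π ω *ᵥ y))

/-! ### Euclidean preliminaries, Gram matrices of samples, and expectations -/

lemma dot_self_nonneg {k : ℕ} (x : Fin k → ℝ) : 0 ≤ x ⬝ᵥ x :=
  Finset.sum_nonneg fun _ _ => mul_self_nonneg _

lemma dot_cauchy {k : ℕ} (x y : Fin k → ℝ) : (x ⬝ᵥ y) ^ 2 ≤ (x ⬝ᵥ x) * (y ⬝ᵥ y) := by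
  have h := Finset.sum_mul_sq_le_sq_mul_sq Finset.univ x y
  simpa [dotProduct, sq] using h

lemma abs_dot_le {k : ℕ} (x y : Fin k → ℝ) {A B : ℝ} (hA : 0 ≤ A) (hB : 0 ≤ B)
    (hx : x ⬝ᵥ x ≤ A ^ 2) (hy : y ⬝ᵥ y ≤ B ^ 2) : |x ⬝ᵥ y| ≤ A * B := by
  apply abs_le_of_sq_le_sq _ (mul_nonneg hA hB)
  calc (x ⬝ᵥ y) ^ 2 ≤ (x ⬝ᵥ x) * (y ⬝ᵥ y) := dot_cauchy x y
    _ ≤ A ^ 2 * B ^ 2 := mul_le_mul hx hy (dot_self_nonneg y) (sq_nonneg A)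
    _ = (A * B) ^ 2 := by ring

/-- The quadratic form of `H` is bounded below by `τ` times the squared Euclidean norm. -/
def LowerBdd {k : ℕ} (τ : ℝ) (H : Matrix (Fin k) (Fin k) ℝ) : Prop :=
  ∀ x : Fin k → ℝ, τ * (x ⬝ᵥ x) ≤ x ⬝ᵥ (H *ᵥ x)

lemma LowerBdd.isUnit_det {k : ℕ} {τ : ℝ} {H : Matrix (Fin k) (Fin k) ℝ} (hτ : 0 < τ)
    (h : LowerBdd τ H) : IsUnit H.det := by
  rw [isUnit_iff_ne_zero]
  intro h0
  obtain ⟨v, hv, hv0⟩ := Matrix.exists_mulVec_eq_zero_iff.mpr h0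
  have h1 := h v
  rw [hv0, dotProduct_zero] at h1
  have h2 : 0 < v ⬝ᵥ v := lt_of_le_of_ne (dot_self_nonneg v)
    (fun h => hv (dotProduct_self_eq_zero.mp h.symm))
  nlinarith

lemma mulVec_inv_cancel {k : ℕ} {H : Matrix (Fin k) (Fin k) ℝ} (h : IsUnit H.det)
    (x : Fin k → ℝ) : H *ᵥ (H⁻¹ *ᵥ x) = x := by
  rw [mulVec_mulVec, Matrix.mul_nonsing_inv _ h, one_mulVec]

lemma inv_mulVec_eq {k : ℕ} {H : Matrix (Fin k) (Fin k) ℝ} (h : IsUnit H.det)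
    {x y : Fin k → ℝ} (hxy : H *ᵥ x = y) : H⁻¹ *ᵥ y = x := by
  rw [← hxy, mulVec_mulVec, Matrix.nonsing_inv_mul _ h, one_mulVec]

lemma LowerBdd.quad_inv {k : ℕ} {τ : ℝ} {H : Matrix (Fin k) (Fin k) ℝ} (hτ : 0 < τ)
    (h : LowerBdd τ H) (x : Fin k → ℝ) :
    τ * ((H⁻¹ *ᵥ x) ⬝ᵥ (H⁻¹ *ᵥ x)) ≤ x ⬝ᵥ (H⁻¹ *ᵥ x) := by
  have h1 := h (H⁻¹ *ᵥ x)
  rwa [mulVec_inv_cancel (h.isUnit_det hτ), dotProduct_comm _ x] at h1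

lemma LowerBdd.quad_inv_nonneg {k : ℕ} {τ : ℝ} {H : Matrix (Fin k) (Fin k) ℝ} (hτ : 0 < τ)
    (h : LowerBdd τ H) (x : Fin k → ℝ) : 0 ≤ x ⬝ᵥ (H⁻¹ *ᵥ x) :=
  le_trans (mul_nonneg hτ.le (dot_self_nonneg _)) (h.quad_inv hτ x)

lemma LowerBdd.quad_inv_le {k : ℕ} {τ : ℝ} {H : Matrix (Fin k) (Fin k) ℝ} (hτ : 0 < τ)
    (h : LowerBdd τ H) (x : Fin k → ℝ) : τ * (x ⬝ᵥ (H⁻¹ *ᵥ x)) ≤ x ⬝ᵥ x := by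
  have h1 := h.quad_inv hτ x
  have h2 := dot_cauchy x (H⁻¹ *ᵥ x)
  have h3 := h.quad_inv_nonneg hτ x
  have h4 := dot_self_nonneg x
  rcases h3.eq_or_lt with h0 | h0
  · rw [← h0]; simpa using h4
  · by_contra hc
    push Not at hc
    nlinarith

lemma LowerBdd.norm_inv_le {k : ℕ} {τ : ℝ} {H : Matrix (Fin k) (Fin k) ℝ} (hτ : 0 < τ)
    (h : LowerBdd τ H) (x : Fin k → ℝ) :
    τ ^ 2 * ((H⁻¹ *ᵥ x) ⬝ᵥ (H⁻¹ *ᵥ x)) ≤ x ⬝ᵥ x := by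
  nlinarith [h.quad_inv hτ x, h.quad_inv_le hτ x]

/-- The Gram matrix `∑_{s ∈ I} a_{ω s} a_{ω s}ᵀ` of the rows drawn at the times in `I`. -/
def gramOn {n p m : ℕ} (a : Fin n → Fin p → ℝ) (ω : Fin m → Fin n) (I : Finset (Fin m)) :
    Matrix (Fin p) (Fin p) ℝ :=
  ∑ s ∈ I, vecMulVec (a (ω s)) (a (ω s))

section gram
variable {n p m : ℕ} (a : Fin n → Fin p → ℝ) (ω : Fin m → Fin n)

lemma vecMulVec_mulVec' {k : ℕ} (v x : Fin k → ℝ) :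
    vecMulVec v v *ᵥ x = (v ⬝ᵥ x) • v := by
  ext i
  simp [vecMulVec, mulVec, dotProduct, Finset.mul_sum, mul_comm, mul_left_comm]

lemma gramOn_mulVec (I : Finset (Fin m)) (x : Fin p → ℝ) :
    gramOn a ω I *ᵥ x = ∑ s ∈ I, (a (ω s) ⬝ᵥ x) • a (ω s) := by
  simp [gramOn, Matrix.sum_mulVec, vecMulVec_mulVec']

lemma gramOn_quad (I : Finset (Fin m)) (x : Fin p → ℝ) :
    x ⬝ᵥ (gramOn a ω I *ᵥ x) = ∑ s ∈ I, (a (ω s) ⬝ᵥ x) ^ 2 := by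
  rw [gramOn_mulVec, dotProduct_sum]
  refine Finset.sum_congr rfl fun s _ => ?_
  rw [dotProduct_smul, smul_eq_mul, dotProduct_comm x, sq]

lemma gramOn_symm (I : Finset (Fin m)) : (gramOn a ω I)ᵀ = gramOn a ω I := by
  simp [gramOn, Matrix.transpose_sum, transpose_vecMulVec]

lemma gramOn_insert {I : Finset (Fin m)} {s : Fin m} (hs : s ∉ I) :
    gramOn a ω (insert s I) = gramOn a ω I + vecMulVec (a (ω s)) (a (ω s)) := by
  rw [gramOn, Finset.sum_insert hs, add_comm]; rfl

lemma gramOn_update {I : Finset (Fin m)} {s : Fin m} (hs : s ∉ I) (i : Fin n) :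
    gramOn a (Function.update ω s i) I = gramOn a ω I := by
  refine Finset.sum_congr rfl fun t ht => ?_
  have hts : t ≠ s := by rintro rfl; exact hs ht
  rw [Function.update_of_ne hts]

lemma LowerBdd.gram_mono {τ : ℝ} {I J : Finset (Fin m)} (hIJ : I ⊆ J)
    (h : LowerBdd τ (gramOn a ω I)) : LowerBdd τ (gramOn a ω J) := by
  intro x
  refine (h x).trans ?_
  rw [gramOn_quad, gramOn_quad]
  exact Finset.sum_le_sum_of_subset_of_nonneg hIJ fun _ _ _ => sq_nonneg _

end gram

/-- Expectation of `F` over `m` independent draws from `π`. -/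
def expec {n : ℕ} (π : Fin n → ℝ) {m : ℕ} (F : (Fin m → Fin n) → ℝ) : ℝ :=
  ∑ ω, samplingP π ω * F ω

section expec
variable {n m : ℕ} {π : Fin n → ℝ}

/-- Resampling: redrawing the `s`-th coordinate independently does not change expectations. -/
lemma expec_resample (hπ : ∑ i, π i = 1) (s : Fin m) (F : (Fin m → Fin n) → ℝ) :
    expec π F = expec π fun ω => ∑ i, π i * F (Function.update ω s i) := by
  have key : ∀ (ω : Fin m → Fin n) (i : Fin n),
      samplingP π ω * π i = samplingP π (Function.update ω s i) * π (ω s) := by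
    intro ω i
    unfold samplingP
    rw [← Finset.mul_prod_erase _ _ (Finset.mem_univ s),
      ← Finset.mul_prod_erase (a := s) (f := fun t => π (Function.update ω s i t)) _
        (Finset.mem_univ s)]
    have : ∏ t ∈ univ.erase s, π (Function.update ω s i t) = ∏ t ∈ univ.erase s, π (ω t) :=
      Finset.prod_congr rfl fun t ht => by
        rw [Function.update_of_ne (Finset.ne_of_mem_erase ht)]
    rw [this]
    simp only [Function.update_self]
    ring
  unfold expec
  calc ∑ ω, samplingP π ω * F ω
      = ∑ q : (Fin m → Fin n) × Fin n, samplingP π q.1 * π q.2 * F q.1 := by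
        rw [Fintype.sum_prod_type]
        refine Finset.sum_congr rfl fun ω _ => ?_
        simp only [← Finset.sum_mul, ← Finset.mul_sum, hπ, mul_one]
    _ = ∑ q : (Fin m → Fin n) × Fin n,
          samplingP π q.1 * π q.2 * F (Function.update q.1 s q.2) := by
        refine Finset.sum_nbij' (fun q => (Function.update q.1 s q.2, q.1 s))
          (fun q => (Function.update q.1 s q.2, q.1 s)) ?_ ?_ ?_ ?_ ?_
        · simp
        · simp
        · rintro ⟨ω, i⟩ _; simp
        · rintro ⟨ω, i⟩ _; simp
        · rintro ⟨ω, i⟩ _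
          simp only [Function.update_idem, Function.update_eq_self]
          rw [key ω i]
    _ = _ := by
        rw [Fintype.sum_prod_type]
        refine Finset.sum_congr rfl fun ω _ => ?_
        rw [Finset.mul_sum]
        exact Finset.sum_congr rfl fun i _ => by ring

lemma samplingP_nonneg (hπ0 : ∀ i, 0 < π i) (ω : Fin m → Fin n) : 0 ≤ samplingP π ω :=
  Finset.prod_nonneg fun _ _ => (hπ0 _).le

lemma expec_mono (hπ0 : ∀ i, 0 < π i) {F F' : (Fin m → Fin n) → ℝ} (h : ∀ ω, F ω ≤ F' ω) :
    expec π F ≤ expec π F' :=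
  Finset.sum_le_sum fun ω _ => mul_le_mul_of_nonneg_left (h ω) (samplingP_nonneg hπ0 ω)

lemma expec_const (hπ : ∑ i, π i = 1) (c : ℝ) : expec π (fun _ : Fin m → Fin n => c) = c := by
  unfold expec samplingP
  rw [← Finset.sum_mul, ← Fintype.prod_sum fun (_ : Fin m) i => π i]
  simp [hπ]

lemma expec_add (F F' : (Fin m → Fin n) → ℝ) :
    expec π (fun ω => F ω + F' ω) = expec π F + expec π F' := by
  simp [expec, mul_add, Finset.sum_add_distrib]

lemma expec_sub (F F' : (Fin m → Fin n) → ℝ) :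
    expec π (fun ω => F ω - F' ω) = expec π F - expec π F' := by
  simp [expec, mul_sub, Finset.sum_sub_distrib]

lemma expec_const_mul (c : ℝ) (F : (Fin m → Fin n) → ℝ) :
    expec π (fun ω => c * F ω) = c * expec π F := by
  simp [expec, Finset.mul_sum, mul_left_comm]

lemma expec_sum {ι : Type*} (I : Finset ι) (F : ι → (Fin m → Fin n) → ℝ) :
    expec π (fun ω => ∑ k ∈ I, F k ω) = ∑ k ∈ I, expec π (F k) := by
  simp only [expec, Finset.mul_sum]
  rw [Finset.sum_comm]

lemma abs_expec_le (hπ0 : ∀ i, 0 < π i) (F : (Fin m → Fin n) → ℝ) :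
    |expec π F| ≤ expec π fun ω => |F ω| := by
  refine (Finset.abs_sum_le_sum_abs _ _).trans (Finset.sum_le_sum fun ω _ => ?_)
  rw [abs_mul, abs_of_nonneg (samplingP_nonneg hπ0 ω)]

end expec

/-! ### Spectral inequalities for power traces of symmetric matrices -/

lemma exists_diagonalization {k : ℕ} {B : Matrix (Fin k) (Fin k) ℝ} (hB : Bᵀ = B) :
    ∃ (V : Matrix (Fin k) (Fin k) ℝ) (d : Fin k → ℝ),
      Vᵀ * V = 1 ∧ V * Vᵀ = 1 ∧ B = V * diagonal d * Vᵀ := by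
  have hH : B.IsHermitian := by
    rw [Matrix.IsHermitian, conjTranspose_eq_transpose_of_trivial, hB]
  have hs := hH.spectral_theorem
  have h1 := Unitary.coe_star_mul_self hH.eigenvectorUnitary
  have h2 := Unitary.coe_mul_star_self hH.eigenvectorUnitary
  simp only [Unitary.coe_star, star_eq_conjTranspose,
    conjTranspose_eq_transpose_of_trivial] at h1 h2
  refine ⟨hH.eigenvectorUnitary, hH.eigenvalues, h1, h2, ?_⟩
  rw [Unitary.conjStarAlgAut_apply, star_eq_conjTranspose,
    conjTranspose_eq_transpose_of_trivial] at hs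
  exact hs

lemma dot_mul_mulVec {k l : ℕ} (M : Matrix (Fin k) (Fin l) ℝ) (x : Fin l → ℝ) (y : Fin k → ℝ) :
    (M *ᵥ x) ⬝ᵥ y = x ⬝ᵥ (Mᵀ *ᵥ y) := by
  rw [dotProduct_mulVec x, vecMul_transpose]

lemma dot_mulVec_symm {k : ℕ} {R : Matrix (Fin k) (Fin k) ℝ} (hR : Rᵀ = R)
    (x y : Fin k → ℝ) : (R *ᵥ x) ⬝ᵥ y = x ⬝ᵥ (R *ᵥ y) := by
  rw [dot_mul_mulVec, hR]

/-- Joint spectral description of all powers of a positive semidefinite matrix. -/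
lemma spectral_powers {k : ℕ} {R : Matrix (Fin k) (Fin k) ℝ} (hR : Rᵀ = R)
    (hpos : ∀ x, 0 ≤ x ⬝ᵥ (R *ᵥ x)) :
    ∃ (V : Matrix (Fin k) (Fin k) ℝ) (d : Fin k → ℝ), Vᵀ * V = 1 ∧ V * Vᵀ = 1 ∧
      (∀ i, 0 ≤ d i) ∧ (∀ (q : ℕ) (x : Fin k → ℝ),
        x ⬝ᵥ ((R ^ q) *ᵥ x) = ∑ i, d i ^ q * (Vᵀ *ᵥ x) i ^ 2) ∧
      (∀ q : ℕ, (R ^ q).trace = ∑ i, d i ^ q) := by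
  obtain ⟨V, d, h1, h2, hd⟩ := exists_diagonalization hR
  have hp : ∀ q : ℕ, R ^ q = V * diagonal (d ^ q) * Vᵀ := by
    intro q
    induction q with
    | zero => simp [h2]
    | succ q ih =>
      rw [pow_succ, ih]
      nth_rewrite 1 [hd]
      calc V * diagonal (d ^ q) * Vᵀ * (V * diagonal d * Vᵀ)
          = V * diagonal (d ^ q) * (Vᵀ * V) * diagonal d * Vᵀ := by simp only [Matrix.mul_assoc]
        _ = V * (diagonal (d ^ q) * diagonal d) * Vᵀ := by rw [h1]; simp only [Matrix.mul_one, Matrix.mul_assoc]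
        _ = _ := by rw [diagonal_mul_diagonal, pow_succ]; rfl
  have hquad : ∀ (q : ℕ) (x : Fin k → ℝ),
      x ⬝ᵥ ((R ^ q) *ᵥ x) = ∑ i, d i ^ q * (Vᵀ *ᵥ x) i ^ 2 := by
    intro q x
    rw [hp, ← mulVec_mulVec, ← mulVec_mulVec, dotProduct_comm, dot_mul_mulVec]
    simp only [dotProduct, mulVec_diagonal, Pi.pow_apply]
    exact Finset.sum_congr rfl fun i _ => by ring
  refine ⟨V, d, h1, h2, ?_, hquad, ?_⟩
  · intro i
    have h := hpos (V *ᵥ Pi.single i 1)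
    have h' := hquad 1 (V *ᵥ Pi.single i 1)
    rw [pow_one] at h'
    rw [h', mulVec_mulVec, h1, one_mulVec] at h
    simpa [Pi.single_apply] using h
  · intro q
    rw [hp, Matrix.trace_mul_comm, ← Matrix.mul_assoc, h1, Matrix.one_mul, trace_diagonal]
    rfl

/-- Chebyshev's inequality for the moments `m_k = aᵀ R^k a` of a positive semidefinite `R`. -/
lemma moment_chebyshev {k : ℕ} {R : Matrix (Fin k) (Fin k) ℝ} (hR : Rᵀ = R)
    (hpos : ∀ x, 0 ≤ x ⬝ᵥ (R *ᵥ x)) (a : Fin k → ℝ) (i j : ℕ) :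
    (a ⬝ᵥ ((R ^ (i + 1)) *ᵥ a)) * (a ⬝ᵥ ((R ^ (j + 1)) *ᵥ a)) ≤
      (a ⬝ᵥ (R *ᵥ a)) * (a ⬝ᵥ ((R ^ (i + j + 1)) *ᵥ a)) := by
  obtain ⟨V, d, -, -, hd, hq, -⟩ := spectral_powers hR hpos
  have h1 := hq 1 a
  rw [pow_one] at h1
  rw [h1, hq, hq, hq]
  set b := fun s => (Vᵀ *ᵥ a) s ^ 2 with hb
  have hb0 : ∀ s, 0 ≤ b s := fun s => sq_nonneg _
  have hmono : ∀ (e : ℕ) {x y : ℝ}, 0 ≤ x → x ≤ y → x ^ e ≤ y ^ e := fun e x y hx hxy =>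
    pow_le_pow_left₀ hx hxy e
  have key : 0 ≤ ∑ s, ∑ t, b s * b t * d s * d t * ((d s ^ i - d t ^ i) * (d s ^ j - d t ^ j)) := by
    refine Finset.sum_nonneg fun s _ => Finset.sum_nonneg fun t _ => ?_
    refine mul_nonneg (by have := hb0 s; have := hb0 t; have := hd s; have := hd t; positivity) ?_
    rcases le_total (d s) (d t) with h | h
    · exact mul_nonneg_of_nonpos_of_nonpos (sub_nonpos.2 (hmono i (hd s) h))
        (sub_nonpos.2 (hmono j (hd s) h))
    · exact mul_nonneg (sub_nonneg.2 (hmono i (hd t) h)) (sub_nonneg.2 (hmono j (hd t) h))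
  have expand : ∑ s, ∑ t, b s * b t * d s * d t * ((d s ^ i - d t ^ i) * (d s ^ j - d t ^ j)) =
      2 * ((∑ s, d s ^ 1 * b s) * ∑ s, d s ^ (i + j + 1) * b s)
      - 2 * ((∑ s, d s ^ (i + 1) * b s) * ∑ s, d s ^ (j + 1) * b s) := by
    have e1 : ∑ s, ∑ t, b s * b t * d s * d t * ((d s ^ i - d t ^ i) * (d s ^ j - d t ^ j)) =
        ((∑ s, d s ^ (i + j + 1) * b s) * ∑ s, d s ^ 1 * b s)
        + ((∑ s, d s ^ 1 * b s) * ∑ s, d s ^ (i + j + 1) * b s)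
        - ((∑ s, d s ^ (i + 1) * b s) * ∑ s, d s ^ (j + 1) * b s)
        - ((∑ s, d s ^ (j + 1) * b s) * ∑ s, d s ^ (i + 1) * b s) := by
      simp only [Finset.sum_mul_sum, ← Finset.sum_add_distrib, ← Finset.sum_sub_distrib]
      refine Finset.sum_congr rfl fun s _ => Finset.sum_congr rfl fun t _ => ?_
      ring
    rw [e1]; ring
  rw [expand] at key
  linarith

/-- Effect of a rank-one update `R ↦ R' = (R⁻¹ + a aᵀ)⁻¹` on the trace of the `q`-th power:
the trace drops by at least `q (1 - q aᵀ R a) aᵀ R^{q+1} a`. -/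
lemma trace_drop_aux {k : ℕ} {R R' : Matrix (Fin k) (Fin k) ℝ} (hR : Rᵀ = R)
    (hpos : ∀ x, 0 ≤ x ⬝ᵥ (R *ᵥ x)) (hR' : R'ᵀ = R') (hpos' : ∀ x, 0 ≤ x ⬝ᵥ (R' *ᵥ x))
    (a : Fin k → ℝ)
    (hrel : R' = R - (1 + a ⬝ᵥ (R *ᵥ a))⁻¹ • vecMulVec (R *ᵥ a) (R *ᵥ a)) (q : ℕ) :
    (q : ℝ) * (1 - q * (a ⬝ᵥ (R *ᵥ a))) * (a ⬝ᵥ ((R ^ (q + 1)) *ᵥ a)) ≤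
      (R ^ q).trace - (R' ^ q).trace := by
  set M : ℕ → ℝ := fun j => a ⬝ᵥ ((R ^ j) *ᵥ a) with hM
  have hM1 : a ⬝ᵥ (R *ᵥ a) = M 1 := by simp [hM]
  rw [hM1] at hrel ⊢
  have hM1pos : 0 ≤ M 1 := hM1 ▸ hpos a
  set γ := (1 + M 1)⁻¹ with hγ
  have hγ0 : 0 < γ := by positivity
  have hγ1 : γ ≤ 1 := inv_le_one_of_one_le₀ (by linarith)
  have hγM : γ * (1 + M 1) = 1 := inv_mul_cancel₀ (by positivity)
  have hMpos : ∀ j, 0 ≤ M j := by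
    intro j
    obtain ⟨V, d, -, -, hd, hq, -⟩ := spectral_powers hR hpos
    rw [hM]; simp only [hq]
    exact Finset.sum_nonneg fun i _ => mul_nonneg (pow_nonneg (hd i) _) (sq_nonneg _)
  have hMpos' : ∀ j, 0 ≤ a ⬝ᵥ ((R' ^ j) *ᵥ a) := by
    intro j
    obtain ⟨V, d, -, -, hd, hq, -⟩ := spectral_powers hR' hpos'
    simp only [hq]
    exact Finset.sum_nonneg fun i _ => mul_nonneg (pow_nonneg (hd i) _) (sq_nonneg _)
  have hpowT : ∀ j, (R ^ j)ᵀ = R ^ j := fun j => by rw [transpose_pow, hR]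
  have hpowT' : ∀ j, (R' ^ j)ᵀ = R' ^ j := fun j => by rw [transpose_pow, hR']
  -- `R' x = R x - γ (aᵀ R x) R a`
  have hR'x : ∀ x, R' *ᵥ x = R *ᵥ x - (γ * ((R *ᵥ a) ⬝ᵥ x)) • (R *ᵥ a) := by
    intro x
    rw [hrel, sub_mulVec, smul_mulVec, vecMulVec_mulVec', smul_smul]
  have hRa : R *ᵥ a = (1 + M 1) • (R' *ᵥ a) := by
    rw [hR'x, dotProduct_comm, hM1]
    have : (1 + M 1) * (1 - γ * M 1) = 1 := by linear_combination (-M 1) * hγM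
    calc R *ᵥ a = ((1 + M 1) * (1 - γ * M 1)) • (R *ᵥ a) := by rw [this, one_smul]
      _ = _ := by rw [mul_smul, sub_smul, one_smul]
  set N : ℕ → ℕ → ℝ := fun j l => ((R' ^ j) *ᵥ a) ⬝ᵥ ((R ^ l) *ᵥ a) with hN
  have hN0 : ∀ l, N 0 l = M l := fun l => by simp [hN, hM]
  have hN1 : ∀ j, 0 ≤ N j 1 := by
    intro j
    have h2 : N j 1 = (1 + M 1) * (a ⬝ᵥ ((R' ^ (j + 1)) *ᵥ a)) := by
      simp only [hN, pow_one]
      rw [hRa, dotProduct_smul, smul_eq_mul, dot_mulVec_symm (hpowT' j), mulVec_mulVec, ← pow_succ]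
    rw [h2]
    exact mul_nonneg (by linarith) (hMpos' _)
  have hrec : ∀ j l, N (j + 1) l = N j (l + 1) - γ * M (l + 1) * N j 1 := by
    intro j l
    simp only [hN, hM, pow_one]
    rw [pow_succ' R' j, ← mulVec_mulVec, dot_mulVec_symm hR', hR'x, dotProduct_sub,
      dotProduct_smul, smul_eq_mul, mulVec_mulVec, ← pow_succ', dot_mulVec_symm hR,
      mulVec_mulVec, ← pow_succ']
  have hup : ∀ j l, N j l ≤ M (j + l) := by
    intro j
    induction j with
    | zero => intro l; rw [hN0, zero_add]
    | succ j ih =>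
      intro l
      rw [hrec]
      have h1 := ih (l + 1)
      have h2 : 0 ≤ γ * M (l + 1) * N j 1 := mul_nonneg (mul_nonneg hγ0.le (hMpos _)) (hN1 j)
      have e : j + (l + 1) = j + 1 + l := by ring
      rw [e] at h1
      linarith
  have hlow : ∀ j l, (1 - j * M 1) * M (j + l) ≤ N j l := by
    intro j
    induction j with
    | zero => intro l; simp [hN0]
    | succ j ih =>
      intro l
      rw [hrec]
      have h1 := ih (l + 1)
      have e : j + (l + 1) = j + 1 + l := by ring
      rw [e] at h1
      have h2 : γ * M (l + 1) * N j 1 ≤ M (l + 1) * M (j + 1) := by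
        have := mul_le_mul_of_nonneg_left (hup j 1) (mul_nonneg hγ0.le (hMpos (l + 1)))
        have h3 : 0 ≤ M (l + 1) * M (j + 1) := mul_nonneg (hMpos _) (hMpos _)
        nlinarith
      have h3 := moment_chebyshev hR hpos a l j
      rw [hM1] at h3
      have h4 : M (l + 1) * M (j + 1) ≤ M 1 * M (j + 1 + l) := by
        have e2 : l + j + 1 = j + 1 + l := by ring
        rw [e2] at h3
        exact h3
      push_cast
      nlinarith
  -- telescoping `R^q - R'^q` through the mixed products `R'^{q-i} R^i`
  have htel : (R ^ q).trace - (R' ^ q).trace = ∑ i ∈ range q, N (q - i) (i + 1) := by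
    have h := Finset.sum_range_sub (fun i => (R' ^ (q - i) * R ^ i).trace) q
    simp only [Nat.sub_self, pow_zero, Matrix.one_mul, Nat.sub_zero, Matrix.mul_one] at h
    rw [← h]
    refine Finset.sum_congr rfl fun i hi => ?_
    have hi' : i < q := Finset.mem_range.1 hi
    obtain ⟨j, rfl⟩ : ∃ j, q = i + j + 1 := ⟨q - i - 1, by omega⟩
    have e1 : i + j + 1 - (i + 1) = j := by omega
    have e2 : i + j + 1 - i = j + 1 := by omega
    rw [e1, e2, pow_succ R' j, pow_succ' R i, ← Matrix.trace_sub, ← Matrix.mul_assoc,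
      ← Matrix.sub_mul, ← Matrix.mul_sub]
    have hdiff : R - R' = γ • vecMulVec (R *ᵥ a) (R *ᵥ a) := by rw [hrel]; abel
    rw [hdiff, Matrix.mul_smul, Matrix.smul_mul, trace_smul, mul_vecMulVec, vecMulVec_mul,
      trace_vecMulVec]
    have hv : (R *ᵥ a) ᵥ* R ^ i = (R ^ (i + 1)) *ᵥ a := by
      conv_lhs => rw [← hpowT i, vecMul_transpose, mulVec_mulVec, ← pow_succ]
    rw [hv]
    have hw : (R' ^ j) *ᵥ (R *ᵥ a) = (1 + M 1) • ((R' ^ (j + 1)) *ᵥ a) := by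
      rw [hRa, mulVec_smul, mulVec_mulVec, ← pow_succ]
    rw [hw, smul_dotProduct, smul_eq_mul, smul_eq_mul, ← mul_assoc, hγM, one_mul]
  rw [htel]
  calc (q : ℝ) * (1 - q * M 1) * M (q + 1) = ∑ i ∈ range q, (1 - q * M 1) * M (q + 1) := by
        simp [mul_assoc]
    _ ≤ _ := by
        refine Finset.sum_le_sum fun i hi => ?_
        have hi' : i < q := Finset.mem_range.1 hi
        have e : q - i + (i + 1) = q + 1 := by omega
        refine le_trans ?_ (e ▸ hlow (q - i) (i + 1))
        refine mul_le_mul_of_nonneg_right ?_ (hMpos _)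
        have : ((q - i : ℕ) : ℝ) ≤ q := by exact_mod_cast Nat.sub_le q i
        nlinarith

/-! ### Lower tail of the sampled Gram matrix -/

lemma inv_symm {k : ℕ} {B : Matrix (Fin k) (Fin k) ℝ} (hB : Bᵀ = B) : (B⁻¹)ᵀ = B⁻¹ := by
  rw [transpose_nonsing_inv, hB]

lemma vecMulVec_self_symm {k : ℕ} (a : Fin k → ℝ) : (vecMulVec a a)ᵀ = vecMulVec a a :=
  transpose_vecMulVec a a

lemma LowerBdd.add_rankOne {k : ℕ} {τ : ℝ} {B : Matrix (Fin k) (Fin k) ℝ}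
    (h : LowerBdd τ B) (a : Fin k → ℝ) : LowerBdd τ (B + vecMulVec a a) := by
  intro x
  rw [add_mulVec, dotProduct_add, vecMulVec_mulVec', dotProduct_smul, smul_eq_mul,
    dotProduct_comm x a]
  have := h x
  nlinarith [mul_self_nonneg (a ⬝ᵥ x)]

/-- Sherman–Morrison formula. -/
lemma inv_add_rankOne {k : ℕ} {τ : ℝ} {B : Matrix (Fin k) (Fin k) ℝ} (hB : Bᵀ = B)
    (hτ : 0 < τ) (h : LowerBdd τ B) (a : Fin k → ℝ) :
    (B + vecMulVec a a)⁻¹ =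
      B⁻¹ - (1 + a ⬝ᵥ (B⁻¹ *ᵥ a))⁻¹ • vecMulVec (B⁻¹ *ᵥ a) (B⁻¹ *ᵥ a) := by
  have hdet := h.isUnit_det hτ
  apply Matrix.inv_eq_right_inv
  have h0 := h.quad_inv_nonneg hτ a
  set M1 := a ⬝ᵥ (B⁻¹ *ᵥ a) with hM1
  have hv : a ᵥ* B⁻¹ = B⁻¹ *ᵥ a := by
    conv_lhs => rw [← inv_symm hB, vecMul_transpose]
  rw [Matrix.add_mul, Matrix.mul_sub, Matrix.mul_sub, Matrix.mul_nonsing_inv _ hdet,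
    Matrix.mul_smul, Matrix.mul_smul, mul_vecMulVec, mul_vecMulVec, mulVec_inv_cancel hdet,
    vecMulVec_mul, hv, vecMulVec_mulVec', ← hM1, smul_vecMulVec, smul_smul]
  have : (1 : ℝ) - (1 + M1)⁻¹ - (1 + M1)⁻¹ * M1 = 0 := by
    field_simp
    ring
  calc _ = 1 + ((1 : ℝ) - (1 + M1)⁻¹ - (1 + M1)⁻¹ * M1) • vecMulVec a (B⁻¹ *ᵥ a) := by
        simp only [sub_smul, one_smul]; abel
    _ = 1 := by rw [this, zero_smul, add_zero]

lemma moment_nonneg {k : ℕ} {R : Matrix (Fin k) (Fin k) ℝ} (hR : Rᵀ = R)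
    (hpos : ∀ x, 0 ≤ x ⬝ᵥ (R *ᵥ x)) (q : ℕ) (a : Fin k → ℝ) : 0 ≤ a ⬝ᵥ ((R ^ q) *ᵥ a) := by
  obtain ⟨V, d, -, -, hd, hq, -⟩ := spectral_powers hR hpos
  simp only [hq]
  exact Finset.sum_nonneg fun i _ => mul_nonneg (pow_nonneg (hd i) _) (sq_nonneg _)

/-- A rank-one update by a short vector `a` lowers `tr B^{-q}` at first order: the second-order
correction is absorbed by the factor `3/4` as long as `q ‖a‖² ≤ 1/4`. -/
lemma trace_drop {k : ℕ} {B : Matrix (Fin k) (Fin k) ℝ} (hB : Bᵀ = B) (h : LowerBdd 1 B)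
    {a : Fin k → ℝ} {ε : ℝ} (ha : a ⬝ᵥ a ≤ ε) (q : ℕ) (hq : q * ε ≤ 1 / 4) :
    (((B + vecMulVec a a)⁻¹) ^ q).trace ≤
      ((B⁻¹) ^ q).trace - q * (3 / 4) * (a ⬝ᵥ (((B⁻¹) ^ (q + 1)) *ᵥ a)) := by
  have hB' : (B + vecMulVec a a)ᵀ = B + vecMulVec a a := by
    rw [transpose_add, hB, vecMulVec_self_symm]
  have h1 := trace_drop_aux (inv_symm hB) (h.quad_inv_nonneg one_pos) (inv_symm hB')
    ((h.add_rankOne a).quad_inv_nonneg one_pos) a (inv_add_rankOne hB one_pos h a) q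
  have h2 := h.quad_inv_le one_pos a
  have h3 := moment_nonneg (inv_symm hB) (h.quad_inv_nonneg one_pos) (q + 1) a
  have hq0 : (0 : ℝ) ≤ q := Nat.cast_nonneg q
  have h4 : (q : ℝ) * (a ⬝ᵥ (B⁻¹ *ᵥ a)) ≤ 1 / 4 := by nlinarith
  have h5 : (q : ℝ) * (3 / 4) * (a ⬝ᵥ (((B⁻¹) ^ (q + 1)) *ᵥ a)) ≤
      q * (1 - q * (a ⬝ᵥ (B⁻¹ *ᵥ a))) * (a ⬝ᵥ (((B⁻¹) ^ (q + 1)) *ᵥ a)) := by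
    apply mul_le_mul_of_nonneg_right _ h3
    exact mul_le_mul_of_nonneg_left (by linarith) hq0
  linarith

/-- If the quadratic form of `H` is not bounded below by `τ`, then `tr (1 + H)^{-q}` is at least
`(1 + τ)^{-q}`. -/
lemma one_le_of_not_lowerBdd {k : ℕ} {H : Matrix (Fin k) (Fin k) ℝ} (hH : Hᵀ = H)
    (h1 : LowerBdd 1 (1 + H)) {τ : ℝ} (hτ : 0 < τ) {q : ℕ} (hq : q ≠ 0) (hn : ¬ LowerBdd τ H) :
    1 ≤ (1 + τ) ^ q * (((1 + H)⁻¹) ^ q).trace := by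
  by_contra hc
  push Not at hc
  apply hn
  have hB : (1 + H)ᵀ = 1 + H := by rw [transpose_add, transpose_one, hH]
  obtain ⟨V, d, -, -, hd, hquad, htr⟩ := spectral_powers (inv_symm hB) (h1.quad_inv_nonneg one_pos)
  rw [htr] at hc
  have hdi : ∀ i, d i * (1 + τ) ≤ 1 := by
    intro i
    by_contra hi
    push Not at hi
    have h2 : 1 < (d i * (1 + τ)) ^ q := one_lt_pow₀ hi hq
    rw [mul_pow] at h2
    have h3 : d i ^ q ≤ ∑ i, d i ^ q :=
      Finset.single_le_sum (fun j _ => pow_nonneg (hd j) q) (Finset.mem_univ i)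
    have h4 := mul_le_mul_of_nonneg_left h3 (pow_nonneg (by linarith : (0:ℝ) ≤ 1 + τ) q)
    nlinarith
  intro x
  have hx : (1 + H)⁻¹ *ᵥ ((1 + H) *ᵥ x) = x := inv_mulVec_eq (h1.isUnit_det one_pos) rfl
  set y := (1 + H) *ᵥ x with hy
  have e1 : x ⬝ᵥ x = y ⬝ᵥ ((((1 + H)⁻¹) ^ 2) *ᵥ y) := by
    rw [pow_two, ← mulVec_mulVec, hx, ← dot_mulVec_symm (inv_symm hB), hx]
  have e2 : x ⬝ᵥ y = y ⬝ᵥ ((((1 + H)⁻¹) ^ 1) *ᵥ y) := by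
    rw [pow_one, hx, dotProduct_comm]
  have e3 : x ⬝ᵥ y = x ⬝ᵥ x + x ⬝ᵥ (H *ᵥ x) := by
    rw [hy, add_mulVec, one_mulVec, dotProduct_add]
  have e4 : (1 + τ) * (x ⬝ᵥ x) ≤ x ⬝ᵥ y := by
    rw [e1, e2, hquad, hquad, Finset.mul_sum]
    refine Finset.sum_le_sum fun i _ => ?_
    have h5 := hdi i
    have h6 : 0 ≤ d i * (Vᵀ *ᵥ y) i ^ 2 := mul_nonneg (hd i) (sq_nonneg _)
    nlinarith
  linarith

/-- Consecutive spectral moments: eigenvalues above `κ` contribute at least `κ d^q` to `tr R^{q+1}`,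
and those below contribute at most `k κ^q` to `tr R^q`. -/
lemma trace_pow_succ_ge {k : ℕ} {R : Matrix (Fin k) (Fin k) ℝ} (hR : Rᵀ = R)
    (hpos : ∀ x, 0 ≤ x ⬝ᵥ (R *ᵥ x)) (q : ℕ) {κ : ℝ} (hκ : 0 ≤ κ) :
    κ * ((R ^ q).trace - k * κ ^ q) ≤ (R ^ (q + 1)).trace := by
  obtain ⟨V, d, -, -, hd, -, htr⟩ := spectral_powers hR hpos
  rw [htr, htr]
  have : (k : ℝ) * κ ^ q = ∑ _i : Fin k, κ ^ q := by simp
  rw [this, ← Finset.sum_sub_distrib, Finset.mul_sum]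
  refine Finset.sum_le_sum fun i _ => ?_
  rcases le_total κ (d i) with h | h
  · have h1 := pow_le_pow_left₀ hκ h q
    have h2 : 0 ≤ d i ^ q := pow_nonneg (hd i) q
    have h3 : 0 ≤ κ ^ q := pow_nonneg hκ q
    rw [pow_succ]
    nlinarith
  · have h1 := pow_le_pow_left₀ (hd i) h q
    have h2 : 0 ≤ d i ^ (q + 1) := pow_nonneg (hd i) _
    nlinarith

/-- If `∑ π_i a_i a_iᵀ` dominates `1/M`, the `π`-average of `a_iᵀ R^q a_i` dominates
`tr R^q / M`. -/
lemma trace_le_average {n k : ℕ} {π : Fin n → ℝ} {a : Fin n → Fin k → ℝ} {M : ℝ}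
    (hlow : ∀ x, x ⬝ᵥ x ≤ M * ∑ i, π i * (a i ⬝ᵥ x) ^ 2)
    {R : Matrix (Fin k) (Fin k) ℝ} (hR : Rᵀ = R)
    (hpos : ∀ x, 0 ≤ x ⬝ᵥ (R *ᵥ x)) (q : ℕ) :
    (R ^ q).trace ≤ M * ∑ i, π i * (a i ⬝ᵥ ((R ^ q) *ᵥ a i)) := by
  obtain ⟨V, d, hV, -, hd, hquad, htr⟩ := spectral_powers hR hpos
  simp only [htr, hquad]
  have h1 : ∀ l, (1 : ℝ) ≤ M * ∑ i, π i * (Vᵀ *ᵥ a i) l ^ 2 := by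
    intro l
    have h2 := hlow (V *ᵥ Pi.single l 1)
    have e1 : (V *ᵥ Pi.single l 1) ⬝ᵥ (V *ᵥ Pi.single l 1) = 1 := by
      rw [dot_mul_mulVec, mulVec_mulVec, hV, one_mulVec]; simp
    have e2 : ∀ i, a i ⬝ᵥ (V *ᵥ Pi.single l 1) = (Vᵀ *ᵥ a i) l := by
      intro i
      rw [dotProduct_comm, dot_mul_mulVec]; simp
    simp only [e1, e2] at h2
    exact h2
  calc ∑ l, d l ^ q ≤ ∑ l, d l ^ q * (M * ∑ i, π i * (Vᵀ *ᵥ a i) l ^ 2) :=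
        Finset.sum_le_sum fun l _ => le_mul_of_one_le_right (pow_nonneg (hd l) q) (h1 l)
    _ = _ := by
        simp only [Finset.mul_sum]
        rw [Finset.sum_comm]
        exact Finset.sum_congr rfl fun i _ => Finset.sum_congr rfl fun l _ => by ring

open Classical in
/-- Indicator of the event that the Gram matrix of the draws in `I` is badly conditioned from
below (its least eigenvalue is under `1/10`). -/
def badInd {n p m : ℕ} (a : Fin n → Fin p → ℝ) (ω : Fin m → Fin n) (I : Finset (Fin m)) : ℝ :=
  if LowerBdd (1 / 10) (gramOn a ω I) then 0 else 1

section chernoff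
variable {n p m : ℕ} {π : Fin n → ℝ} {a : Fin n → Fin p → ℝ} {ε : ℝ}

lemma lowerBdd_one_add_gram (a : Fin n → Fin p → ℝ) (ω : Fin m → Fin n) (I : Finset (Fin m)) :
    LowerBdd 1 (1 + gramOn a ω I) := by
  intro x
  rw [add_mulVec, dotProduct_add, one_mulVec, gramOn_quad, one_mul]
  exact le_add_of_nonneg_right (Finset.sum_nonneg fun _ _ => sq_nonneg _)

/-- The expected potential `E tr (1 + ∑_{s ∈ I} a_s a_sᵀ)^{-q}` decays exponentially in `|I|`,
down to a negligible floor. -/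
lemma expec_potential_le (hπ0 : ∀ i, 0 < π i) (hπ : ∑ i, π i = 1) (ha : ∀ i, a i ⬝ᵥ a i ≤ ε)
    (hlow : ∀ x, x ⬝ᵥ x ≤ m * ∑ i, π i * (a i ⬝ᵥ x) ^ 2) (hm : 0 < m)
    (q : ℕ) (hq : q * ε ≤ 1 / 4) (hqm : q ≤ m) (I : Finset (Fin m)) :
    expec π (fun ω => (((1 + gramOn a ω I)⁻¹) ^ q).trace) - p * (5 / 6) ^ q ≤
      (1 - 5 / 8 * q / m) ^ I.card * p := by
  have hm' : (0 : ℝ) < m := by exact_mod_cast hm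
  have hqm' : (q : ℝ) ≤ m := by exact_mod_cast hqm
  have hq0 : (0 : ℝ) ≤ q := Nat.cast_nonneg q
  have hratio : (q : ℝ) / m ≤ 1 := (div_le_one hm').2 hqm'
  induction I using Finset.induction_on with
  | empty =>
    simp only [gramOn, Finset.sum_empty, add_zero, inv_one, one_pow, trace_one, Fintype.card_fin,
      expec_const hπ, Finset.card_empty, pow_zero, one_mul]
    have : (0 : ℝ) ≤ p * (5 / 6) ^ q := by positivity
    linarith
  | insert s I hs ih =>
    rw [Finset.card_insert_of_notMem hs, expec_resample hπ s]
    have step : ∀ ω : Fin m → Fin n,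
        ∑ i, π i * (((1 + gramOn a (Function.update ω s i) (insert s I))⁻¹) ^ q).trace ≤
          (1 - 5 / 8 * q / m) * (((1 + gramOn a ω I)⁻¹) ^ q).trace
            + 5 / 8 * q / m * (p * (5 / 6) ^ q) := by
      intro ω
      set B := 1 + gramOn a ω I with hBdef
      have hB : Bᵀ = B := by rw [hBdef, transpose_add, transpose_one, gramOn_symm]
      have hBl : LowerBdd 1 B := lowerBdd_one_add_gram a ω I
      have e1 : ∀ i, 1 + gramOn a (Function.update ω s i) (insert s I) =
          B + vecMulVec (a i) (a i) := by
        intro i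
        rw [gramOn_insert a _ hs, gramOn_update a ω hs, Function.update_self, hBdef, add_assoc]
      simp only [e1]
      have h1 : ∑ i, π i * (((B + vecMulVec (a i) (a i))⁻¹) ^ q).trace ≤
          ∑ i, π i * (((B⁻¹) ^ q).trace - q * (3 / 4) * (a i ⬝ᵥ (((B⁻¹) ^ (q + 1)) *ᵥ a i))) :=
        Finset.sum_le_sum fun i _ =>
          mul_le_mul_of_nonneg_left (trace_drop hB hBl (ha i) q hq) (hπ0 i).le
      have e2 : ∑ i, π i * (((B⁻¹) ^ q).trace - q * (3 / 4) * (a i ⬝ᵥ (((B⁻¹) ^ (q + 1)) *ᵥ a i)))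
          = ((B⁻¹) ^ q).trace
            - q * (3 / 4) * ∑ i, π i * (a i ⬝ᵥ (((B⁻¹) ^ (q + 1)) *ᵥ a i)) := by
        simp only [mul_sub, Finset.sum_sub_distrib, ← Finset.sum_mul, hπ, one_mul,
          Finset.mul_sum]
        congr 1
        exact Finset.sum_congr rfl fun i _ => by ring
      have h2 := trace_le_average hlow (inv_symm hB) (hBl.quad_inv_nonneg one_pos) (q + 1)
      have h3 := trace_pow_succ_ge (inv_symm hB) (hBl.quad_inv_nonneg one_pos) q
        (κ := 5 / 6) (by norm_num)
      set A := ∑ i, π i * (a i ⬝ᵥ (((B⁻¹) ^ (q + 1)) *ᵥ a i)) with hA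
      have h4 : 5 / 6 * (((B⁻¹) ^ q).trace - p * (5 / 6) ^ q) / m ≤ A := by
        rw [div_le_iff₀ hm']; linarith
      have h5 := mul_le_mul_of_nonneg_left h4 (by positivity : (0:ℝ) ≤ q * (3 / 4))
      have e3 : (q : ℝ) * (3 / 4) * (5 / 6 * (((B⁻¹) ^ q).trace - p * (5 / 6) ^ q) / m) =
          5 / 8 * q / m * ((B⁻¹) ^ q).trace - 5 / 8 * q / m * (p * (5 / 6) ^ q) := by ring
      linarith
    have h6 := expec_mono (π := π) hπ0 step
    rw [expec_add, expec_const_mul, expec_const hπ] at h6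
    have h7 : 0 ≤ 1 - 5 / 8 * (q : ℝ) / m := by
      have : 5 / 8 * (q : ℝ) / m = 5 / 8 * (q / m) := by ring
      rw [this]; linarith
    have h8 := mul_le_mul_of_nonneg_left ih h7
    rw [pow_succ]
    linarith

/-- Lower-tail matrix Chernoff bound. If the Gram matrix of the draws in `I` is not bounded below
by `1/10`, the potential `tr (1 + gram)^{-q}` is at least `(10/11)^q`; Markov's inequality applied
to `expec_potential_le` then gives the bound. -/
lemma expec_badInd_le (hπ0 : ∀ i, 0 < π i) (hπ : ∑ i, π i = 1) (ha : ∀ i, a i ⬝ᵥ a i ≤ ε)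
    (hlow : ∀ x, x ⬝ᵥ x ≤ m * ∑ i, π i * (a i ⬝ᵥ x) ^ 2) (hm : 0 < m)
    {q : ℕ} (hq0 : q ≠ 0) (hq : q * ε ≤ 1 / 4) (hqm : q ≤ m) {I : Finset (Fin m)}
    (hI : m ≤ 4 * I.card) :
    expec π (fun ω => badInd a ω I) ≤ 2 * p * Real.exp (-(q / 20)) := by
  have hm' : (0 : ℝ) < m := by exact_mod_cast hm
  have h1 := expec_potential_le hπ0 hπ ha hlow hm q hq hqm I
  have h2 : expec π (fun ω => badInd a ω I) ≤
      (11 / 10) ^ q * expec π (fun ω => (((1 + gramOn a ω I)⁻¹) ^ q).trace) := by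
    rw [← expec_const_mul]
    refine expec_mono hπ0 fun ω => ?_
    have hl := lowerBdd_one_add_gram a ω I
    have hsym := gramOn_symm a ω I
    unfold badInd
    split_ifs with h
    · refine mul_nonneg (by positivity) ?_
      have hB : (1 + gramOn a ω I)ᵀ = 1 + gramOn a ω I := by
        rw [transpose_add, transpose_one, hsym]
      obtain ⟨V, d, -, -, hd, -, htr⟩ := spectral_powers (inv_symm hB) (hl.quad_inv_nonneg one_pos)
      rw [htr]
      exact Finset.sum_nonneg fun i _ => pow_nonneg (hd i) q
    · have := one_le_of_not_lowerBdd hsym hl (by norm_num) hq0 h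
      norm_num at this ⊢
      exact this
  have h3 : (1 - 5 / 8 * (q : ℝ) / m) ^ I.card ≤ Real.exp (-(5 / 32 * q)) := by
    have hqm' : (q : ℝ) ≤ m := by exact_mod_cast hqm
    have hI' : (m : ℝ) ≤ 4 * I.card := by exact_mod_cast hI
    have hnn : 0 ≤ 1 - 5 / 8 * (q : ℝ) / m := by
      have : 5 / 8 * (q : ℝ) / m = 5 / 8 * (q / m) := by ring
      have h4 : (q : ℝ) / m ≤ 1 := (div_le_one hm').2 hqm'
      rw [this]; linarith
    have h5 : 1 - 5 / 8 * (q : ℝ) / m ≤ Real.exp (-(5 / 8 * q / m)) := by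
      have := Real.add_one_le_exp (-(5 / 8 * (q : ℝ) / m))
      linarith
    calc (1 - 5 / 8 * (q : ℝ) / m) ^ I.card ≤ Real.exp (-(5 / 8 * q / m)) ^ I.card :=
          pow_le_pow_left₀ hnn h5 _
      _ = Real.exp (I.card * (-(5 / 8 * q / m))) := by rw [← Real.exp_nat_mul]
      _ ≤ Real.exp (-(5 / 32 * q)) := by
          apply Real.exp_le_exp.2
          have : (5 / 32 : ℝ) * q ≤ I.card * (5 / 8 * q / m) := by
            rw [← mul_div_assoc, le_div_iff₀ hm']
            have : (0 : ℝ) ≤ q := Nat.cast_nonneg q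
            nlinarith
          linarith
  have h4 : (11 / 10 : ℝ) ^ q * Real.exp (-(5 / 32 * q)) ≤ Real.exp (-(q / 20)) := by
    have h5 : (11 / 10 : ℝ) ≤ Real.exp (17 / 160) := by
      have := Real.add_one_le_exp (17 / 160 : ℝ)
      linarith
    calc (11 / 10 : ℝ) ^ q * Real.exp (-(5 / 32 * q))
        ≤ Real.exp (17 / 160) ^ q * Real.exp (-(5 / 32 * q)) := by gcongr
      _ = Real.exp (-(q / 20)) := by
          rw [← Real.exp_nat_mul, ← Real.exp_add]; congr 1; ring
  have h5 : (11 / 10 : ℝ) ^ q * (5 / 6) ^ q ≤ Real.exp (-(q / 20)) := by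
    have h6 : (11 / 12 : ℝ) ≤ Real.exp (-(1 / 20)) := by
      have := Real.add_one_le_exp (-(1 / 20) : ℝ)
      linarith
    rw [← mul_pow]
    calc ((11 / 10 : ℝ) * (5 / 6)) ^ q = (11 / 12) ^ q := by norm_num
      _ ≤ Real.exp (-(1 / 20)) ^ q := by gcongr
      _ = Real.exp (-(q / 20)) := by rw [← Real.exp_nat_mul]; congr 1; ring
  have hp : (0 : ℝ) ≤ p := Nat.cast_nonneg p
  calc expec π (fun ω => badInd a ω I)
      ≤ (11 / 10) ^ q * (Real.exp (-(5 / 32 * q)) * p + p * (5 / 6) ^ q) := by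
        refine h2.trans (mul_le_mul_of_nonneg_left ?_ (by positivity))
        have := mul_le_mul_of_nonneg_right h3 hp
        linarith
    _ = ((11 / 10) ^ q * Real.exp (-(5 / 32 * q))) * p + ((11 / 10) ^ q * (5 / 6) ^ q) * p := by
        ring
    _ ≤ Real.exp (-(q / 20)) * p + Real.exp (-(q / 20)) * p := by gcongr
    _ = _ := by ring

end chernoff

/-! ### The whitened model -/

/-- Whitened form of the sampling problem. The draws are rows `a_i` carrying responses `z_i`,
`m` of them are drawn from `π`, the Gram matrix `∑_s a_s a_sᵀ` concentrates around the identity,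
and the mean of `∑_s z_s a_s` vanishes up to relative errors of order `ε`. Here `ε` bounds all
`‖a_i‖²` and `ρ` stands for the squared norm of the residual. -/
structure WhitenedModel {n p : ℕ} (m : ℕ) (π : Fin n → ℝ) (a : Fin n → Fin p → ℝ)
    (z : Fin n → ℝ) (ε ρ : ℝ) : Prop where
  pos : ∀ i, 0 < π i
  sum_one : ∑ i, π i = 1
  m_pos : 0 < m
  eps_pos : 0 < ε
  eps_le : ε ≤ 1 / 1000
  inv_m_le : 1 / (m : ℝ) ≤ ε
  rho_nonneg : 0 ≤ ρ
  norm_le : ∀ i, a i ⬝ᵥ a i ≤ ε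
  low : ∀ x, x ⬝ᵥ x ≤ m * ∑ i, π i * (a i ⬝ᵥ x) ^ 2
  up : ∀ x, m * ∑ i, π i * (a i ⬝ᵥ x) ^ 2 ≤ (1 + ε) * (x ⬝ᵥ x)
  avg : ∀ x, (∑ i, (m * π i * (a i ⬝ᵥ x)) • a i - x) ⬝ᵥ
    (∑ i, (m * π i * (a i ⬝ᵥ x)) • a i - x) ≤ ε ^ 2 * (x ⬝ᵥ x)
  resp : m * ∑ i, π i * z i ^ 2 ≤ 2 * ρ
  /-- Averages of `z_i c_i a_i` nearly vanish when the weights `c_i` are nearly constant. -/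
  cancel : ∀ (c : Fin n → ℝ) (t B : ℝ), (∀ i, |c i - t| ≤ B) →
    (∑ i, (m * π i * z i * c i) • a i) ⬝ᵥ (∑ i, (m * π i * z i * c i) • a i) ≤
      (2 * B + |t| * ε) ^ 2 * ρ

lemma sum_smul_dot_sum_smul {n k : ℕ} (c c' : Fin n → ℝ) (b b' : Fin n → Fin k → ℝ) :
    (∑ i, c i • b i) ⬝ᵥ (∑ j, c' j • b' j) = ∑ i, ∑ j, c i * c' j * (b i ⬝ᵥ b' j) := by
  rw [sum_dotProduct]
  refine Finset.sum_congr rfl fun i _ => ?_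
  rw [dotProduct_sum]
  refine Finset.sum_congr rfl fun j _ => ?_
  rw [smul_dotProduct, dotProduct_smul, smul_eq_mul, smul_eq_mul, mul_assoc]

lemma mulVec_sum_smul {n k : ℕ} (R : Matrix (Fin k) (Fin k) ℝ) (c : Fin n → ℝ)
    (b : Fin n → Fin k → ℝ) : R *ᵥ (∑ i, c i • b i) = ∑ i, c i • (R *ᵥ b i) := by
  rw [mulVec_sum]
  exact Finset.sum_congr rfl fun i _ => mulVec_smul _ _ _

/-- The part of the rank-two resolvent formula that is not a product of a function of `i` and a
function of `j` is of third order. -/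
lemma offdiag_scalar {x y K L L1 L2 ε : ℝ} (hx : 1 ≤ x) (hx' : x ≤ 101 / 100) (hy : 1 ≤ y)
    (hy' : y ≤ 101 / 100) (hK : |K| ≤ 1 / 100) (hL : |L| ≤ 100 * ε) (hL1 : |L1| ≤ 100 * ε)
    (hL2 : |L2| ≤ 100 * ε) :
    |(x * y * L - y * K * L1 - x * K * L2 + K ^ 2 * L) / (x * y - K ^ 2) ^ 2 -
      (L / (x * y) - L1 / x ^ 2 * (1 / y) * K - 1 / x * (L2 / y ^ 2) * K)| ≤
      500 * ε * K ^ 2 := by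
  have hε : 0 ≤ ε := by linarith [abs_nonneg L]
  have hK2 : K ^ 2 ≤ 1 / 10000 := by
    have := abs_le.1 hK; nlinarith
  have hK0 := sq_nonneg K
  have hxy : 1 ≤ x * y := by nlinarith
  have hxy' : x * y ≤ 103 / 100 := by nlinarith
  have hD : 99 / 100 ≤ x * y - K ^ 2 := by linarith
  have hDpos : 0 < x * y - K ^ 2 := by linarith
  have hx0 : x ≠ 0 := by positivity
  have hy0 : y ≠ 0 := by positivity
  have hDne := hDpos.ne'
  set N := x * y * L - y * K * L1 - x * K * L2 with hN
  have hNabs : |N| ≤ 110 * ε := by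
    have h1 : |x * y * L| ≤ 103 / 100 * (100 * ε) := by
      rw [abs_mul, abs_of_pos (by linarith : 0 < x * y)]
      exact mul_le_mul hxy' hL (abs_nonneg _) (by norm_num)
    have h2 : |y * K * L1| ≤ 101 / 100 * (1 / 100) * (100 * ε) := by
      rw [abs_mul, abs_mul, abs_of_pos (by linarith : 0 < y)]
      gcongr
    have h3 : |x * K * L2| ≤ 101 / 100 * (1 / 100) * (100 * ε) := by
      rw [abs_mul, abs_mul, abs_of_pos (by linarith : 0 < x)]
      gcongr
    calc |N| ≤ |x * y * L| + |y * K * L1| + |x * K * L2| :=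
          (abs_sub _ _).trans (add_le_add (abs_sub _ _) le_rfl)
      _ ≤ _ := by linarith
  have e : (N + K ^ 2 * L) / (x * y - K ^ 2) ^ 2 -
      (L / (x * y) - L1 / x ^ 2 * (1 / y) * K - 1 / x * (L2 / y ^ 2) * K) =
      K ^ 2 * (N * ((x * y + (x * y - K ^ 2)) / ((x * y - K ^ 2) ^ 2 * (x * y) ^ 2))
        + L * (1 / (x * y - K ^ 2) ^ 2)) := by
    rw [hN]; field_simp; ring
  rw [e, abs_mul, abs_of_nonneg hK0, mul_comm (500 * ε)]
  refine mul_le_mul_of_nonneg_left ?_ hK0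
  have h1 : |(x * y + (x * y - K ^ 2)) / ((x * y - K ^ 2) ^ 2 * (x * y) ^ 2)| ≤ 3 := by
    rw [abs_of_nonneg (by positivity), div_le_iff₀ (by positivity)]
    have : 98 / 100 ≤ (x * y - K ^ 2) ^ 2 * (x * y) ^ 2 := by
      have h2 : 98 / 100 ≤ (x * y - K ^ 2) ^ 2 := by nlinarith
      have h3 : 1 ≤ (x * y) ^ 2 := by nlinarith
      nlinarith
    linarith
  have h2 : |1 / (x * y - K ^ 2) ^ 2| ≤ 3 / 2 := by
    rw [abs_of_nonneg (by positivity), div_le_iff₀ (by positivity)]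
    nlinarith
  calc _ ≤ |N * ((x * y + (x * y - K ^ 2)) / ((x * y - K ^ 2) ^ 2 * (x * y) ^ 2))|
        + |L * (1 / (x * y - K ^ 2) ^ 2)| := abs_add_le _ _
    _ ≤ 110 * ε * 3 + 100 * ε * (3 / 2) := by
        rw [abs_mul, abs_mul]
        gcongr
    _ ≤ _ := by linarith

section det
variable {n p m : ℕ} {π : Fin n → ℝ} {a : Fin n → Fin p → ℝ} {z : Fin n → ℝ} {ε ρ : ℝ}

/-- Solution of the rank-two updated system `(H + b bᵀ + c cᵀ) x = b`. -/
lemma rankTwo_solve {H : Matrix (Fin p) (Fin p) ℝ} (hH : Hᵀ = H) (hl : LowerBdd (1 / 10) H)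
    (b c : Fin p → ℝ)
    (hD : (1 + b ⬝ᵥ (H⁻¹ *ᵥ b)) * (1 + c ⬝ᵥ (H⁻¹ *ᵥ c)) - (b ⬝ᵥ (H⁻¹ *ᵥ c)) ^ 2 ≠ 0) :
    (H + vecMulVec b b + vecMulVec c c)⁻¹ *ᵥ b =
      ((1 + b ⬝ᵥ (H⁻¹ *ᵥ b)) * (1 + c ⬝ᵥ (H⁻¹ *ᵥ c)) - (b ⬝ᵥ (H⁻¹ *ᵥ c)) ^ 2)⁻¹ •
        ((1 + c ⬝ᵥ (H⁻¹ *ᵥ c)) • (H⁻¹ *ᵥ b) - (b ⬝ᵥ (H⁻¹ *ᵥ c)) • (H⁻¹ *ᵥ c)) := by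
  have hτ : (0 : ℝ) < 1 / 10 := by norm_num
  have hdet := hl.isUnit_det hτ
  have hdet' := ((hl.add_rankOne b).add_rankOne c).isUnit_det hτ
  apply inv_mulVec_eq hdet'
  have hsym : c ⬝ᵥ (H⁻¹ *ᵥ b) = b ⬝ᵥ (H⁻¹ *ᵥ c) := by
    rw [← dot_mulVec_symm (inv_symm hH), dotProduct_comm]
  set D := (1 + b ⬝ᵥ (H⁻¹ *ᵥ b)) * (1 + c ⬝ᵥ (H⁻¹ *ᵥ c)) - (b ⬝ᵥ (H⁻¹ *ᵥ c)) ^ 2 with hDdef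
  rw [mulVec_smul, mulVec_sub, mulVec_smul, mulVec_smul]
  have e1 : (H + vecMulVec b b + vecMulVec c c) *ᵥ (H⁻¹ *ᵥ b) =
      (1 + b ⬝ᵥ (H⁻¹ *ᵥ b)) • b + (b ⬝ᵥ (H⁻¹ *ᵥ c)) • c := by
    rw [add_mulVec, add_mulVec, mulVec_inv_cancel hdet, vecMulVec_mulVec', vecMulVec_mulVec',
      hsym, add_smul, one_smul]
  have e2 : (H + vecMulVec b b + vecMulVec c c) *ᵥ (H⁻¹ *ᵥ c) =
      (b ⬝ᵥ (H⁻¹ *ᵥ c)) • b + (1 + c ⬝ᵥ (H⁻¹ *ᵥ c)) • c := by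
    rw [add_mulVec, add_mulVec, mulVec_inv_cancel hdet, vecMulVec_mulVec', vecMulVec_mulVec',
      add_smul, one_smul]
    abel
  rw [e1, e2]
  have e3 : (1 + c ⬝ᵥ (H⁻¹ *ᵥ c)) • ((1 + b ⬝ᵥ (H⁻¹ *ᵥ b)) • b + (b ⬝ᵥ (H⁻¹ *ᵥ c)) • c) -
      (b ⬝ᵥ (H⁻¹ *ᵥ c)) • ((b ⬝ᵥ (H⁻¹ *ᵥ c)) • b + (1 + c ⬝ᵥ (H⁻¹ *ᵥ c)) • c) = D • b := by
    ext i
    simp only [Pi.sub_apply, Pi.smul_apply, Pi.add_apply, smul_eq_mul, hDdef]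
    ring
  rw [e3, smul_smul, inv_mul_cancel₀ hD, one_smul]

lemma rankOne_solve {H : Matrix (Fin p) (Fin p) ℝ} (hl : LowerBdd (1 / 10) H) (b : Fin p → ℝ) :
    (H + vecMulVec b b)⁻¹ *ᵥ b = (1 + b ⬝ᵥ (H⁻¹ *ᵥ b))⁻¹ • (H⁻¹ *ᵥ b) := by
  have hτ : (0 : ℝ) < 1 / 10 := by norm_num
  have h0 := hl.quad_inv_nonneg hτ b
  apply inv_mulVec_eq ((hl.add_rankOne b).isUnit_det hτ)
  rw [mulVec_smul, add_mulVec, mulVec_inv_cancel (hl.isUnit_det hτ), vecMulVec_mulVec']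
  ext i
  simp only [Pi.smul_apply, Pi.add_apply, smul_eq_mul]
  field_simp

/-- Resolvent bounds for the rows: `aᵢᵀ H⁻¹ aⱼ = O(ε)` and `aᵢᵀ H⁻² aⱼ = O(ε)`. -/
lemma WhitenedModel.row_bounds (M : WhitenedModel m π a z ε ρ) {H : Matrix (Fin p) (Fin p) ℝ}
    (hl : LowerBdd (1 / 10) H) (i j : Fin n) :
    |a i ⬝ᵥ (H⁻¹ *ᵥ a j)| ≤ 10 * ε ∧ |(H⁻¹ *ᵥ a i) ⬝ᵥ (H⁻¹ *ᵥ a j)| ≤ 100 * ε := by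
  have hε := M.eps_pos
  have hs : (Real.sqrt ε) ^ 2 = ε := Real.sq_sqrt hε.le
  have hR : ∀ i, (H⁻¹ *ᵥ a i) ⬝ᵥ (H⁻¹ *ᵥ a i) ≤ (10 * Real.sqrt ε) ^ 2 := by
    intro i
    have := hl.norm_inv_le (by norm_num) (a i)
    have := M.norm_le i
    rw [mul_pow, hs]; linarith
  have hA : ∀ i, a i ⬝ᵥ a i ≤ (Real.sqrt ε) ^ 2 := fun i => hs.symm ▸ M.norm_le i
  constructor
  · refine (abs_dot_le _ _ (by positivity) (by positivity) (hA i) (hR j)).trans_eq ?_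
    linear_combination 10 * hs
  · refine (abs_dot_le _ _ (by positivity) (by positivity) (hR i) (hR j)).trans_eq ?_
    linear_combination 100 * hs

/-- Quadratic interaction of two draws through `H⁻¹`: the bound uses only the size of the
`z_i` and no cancellation. -/
lemma WhitenedModel.sum_sq_mul_sq_le (M : WhitenedModel m π a z ε ρ)
    {H : Matrix (Fin p) (Fin p) ℝ} (hH : Hᵀ = H) (hl : LowerBdd (1 / 10) H) :
    ∑ i, ∑ j, (m * π i * |z i|) * (m * π j * |z j|) * (a i ⬝ᵥ (H⁻¹ *ᵥ a j)) ^ 2 ≤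
      300 * ε * ρ := by
  have hsym : ∀ i j, a i ⬝ᵥ (H⁻¹ *ᵥ a j) = a j ⬝ᵥ (H⁻¹ *ᵥ a i) := fun i j => by
    rw [← dot_mulVec_symm (inv_symm hH), dotProduct_comm]
  set T := ∑ i, ∑ j, (m * π i * z i ^ 2) * (m * π j) * (a i ⬝ᵥ (H⁻¹ *ᵥ a j)) ^ 2 with hT
  have h1 : ∑ i, ∑ j, (m * π i * |z i|) * (m * π j * |z j|) * (a i ⬝ᵥ (H⁻¹ *ᵥ a j)) ^ 2 ≤ T := by
    have hT' : T = ∑ i, ∑ j, (m * π i) * (m * π j * z j ^ 2) * (a i ⬝ᵥ (H⁻¹ *ᵥ a j)) ^ 2 := by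
      rw [hT, Finset.sum_comm]
      refine Finset.sum_congr rfl fun i _ => Finset.sum_congr rfl fun j _ => ?_
      rw [hsym i j]; ring
    have h2 : 2 * ∑ i, ∑ j, (m * π i * |z i|) * (m * π j * |z j|) *
        (a i ⬝ᵥ (H⁻¹ *ᵥ a j)) ^ 2 ≤ T + T := by
      nth_rewrite 2 [hT']
      rw [hT]
      simp only [Finset.mul_sum, ← Finset.sum_add_distrib]
      refine Finset.sum_le_sum fun i _ => Finset.sum_le_sum fun j _ => ?_
      have h3 : 0 ≤ (m * π i) * (m * π j) * (a i ⬝ᵥ (H⁻¹ *ᵥ a j)) ^ 2 := by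
        have := M.pos i; have := M.pos j; positivity
      have h4 := mul_nonneg h3 (sq_nonneg (|z i| - |z j|))
      have h5 := sq_abs (z i)
      have h6 := sq_abs (z j)
      rw [← h5, ← h6]
      nlinarith
    linarith
  refine h1.trans ?_
  have h2 : ∀ i, ∑ j, (m * π j) * (a i ⬝ᵥ (H⁻¹ *ᵥ a j)) ^ 2 ≤ 150 * ε := by
    intro i
    have h3 := M.up (H⁻¹ *ᵥ a i)
    have h4 := hl.norm_inv_le (by norm_num) (a i)
    have h5 := M.norm_le i
    have h6 := M.eps_le
    have h7 := M.eps_pos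
    have h8 := dot_self_nonneg (H⁻¹ *ᵥ a i)
    have e : ∑ j, (m * π j) * (a i ⬝ᵥ (H⁻¹ *ᵥ a j)) ^ 2 =
        m * ∑ j, π j * (a j ⬝ᵥ (H⁻¹ *ᵥ a i)) ^ 2 := by
      rw [Finset.mul_sum]
      exact Finset.sum_congr rfl fun j _ => by rw [hsym i j]; ring
    rw [e]
    nlinarith
  calc T = ∑ i, (m * π i * z i ^ 2) * ∑ j, (m * π j) * (a i ⬝ᵥ (H⁻¹ *ᵥ a j)) ^ 2 := by
        rw [hT]
        refine Finset.sum_congr rfl fun i _ => ?_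
        rw [Finset.mul_sum]
        exact Finset.sum_congr rfl fun j _ => by ring
    _ ≤ ∑ i, (m * π i * z i ^ 2) * (150 * ε) := by
        refine Finset.sum_le_sum fun i _ => mul_le_mul_of_nonneg_left (h2 i) ?_
        have := M.pos i; positivity
    _ = (m * ∑ i, π i * z i ^ 2) * (150 * ε) := by
        rw [← Finset.sum_mul, Finset.mul_sum]
        congr 1
        exact Finset.sum_congr rfl fun i _ => by ring
    _ ≤ 2 * ρ * (150 * ε) := mul_le_mul_of_nonneg_right M.resp (by linarith [M.eps_pos])
    _ = _ := by ring

/-- Off-diagonal estimate: averaging over two fresh draws `i, j` with the remaining Gram matrix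
`H` held fixed, the cross terms cancel to second order. -/
lemma WhitenedModel.offdiag (M : WhitenedModel m π a z ε ρ)
    {H : Matrix (Fin p) (Fin p) ℝ} (hH : Hᵀ = H) (hl : LowerBdd (1 / 10) H) :
    |∑ i, ∑ j, (m * π i * z i) * (m * π j * z j) *
      (((H + vecMulVec (a i) (a i) + vecMulVec (a j) (a j))⁻¹ *ᵥ a i) ⬝ᵥ
        ((H + vecMulVec (a i) (a i) + vecMulVec (a j) (a j))⁻¹ *ᵥ a j))| ≤
      300000 * ε ^ 2 * ρ := by
  have hε := M.eps_pos
  have hε' := M.eps_le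
  have hρ := M.rho_nonneg
  set R := H⁻¹ with hR
  have hRsym : Rᵀ = R := inv_symm hH
  set K : Fin n → Fin n → ℝ := fun i j => a i ⬝ᵥ (R *ᵥ a j) with hK
  set L : Fin n → Fin n → ℝ := fun i j => (R *ᵥ a i) ⬝ᵥ (R *ᵥ a j) with hL
  set d : Fin n → ℝ := fun i => 1 + K i i with hd
  have hKb : ∀ i j, |K i j| ≤ 10 * ε := fun i j => (M.row_bounds hl i j).1
  have hLb : ∀ i j, |L i j| ≤ 100 * ε := fun i j => (M.row_bounds hl i j).2
  have hKs : ∀ i j, K j i = K i j := fun i j => by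
    simp only [hK]; rw [← dot_mulVec_symm hRsym, dotProduct_comm]
  have hLs : ∀ i j, L j i = L i j := fun i j => dotProduct_comm _ _
  have hKnn : ∀ i, 0 ≤ K i i := fun i => hl.quad_inv_nonneg (by norm_num) (a i)
  have hd1 : ∀ i, 1 ≤ d i := fun i => by have := hKnn i; simp only [hd]; linarith
  have hd2 : ∀ i, d i ≤ 1 + 10 * ε := fun i => by
    have := (abs_le.1 (hKb i i)).2; simp only [hd]; linarith
  have hform : ∀ i j, (((H + vecMulVec (a i) (a i) + vecMulVec (a j) (a j))⁻¹ *ᵥ a i) ⬝ᵥ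
        ((H + vecMulVec (a i) (a i) + vecMulVec (a j) (a j))⁻¹ *ᵥ a j)) =
      (d i * d j * L i j - d j * K i j * L i i - d i * K i j * L j j + K i j ^ 2 * L i j) /
        (d i * d j - K i j ^ 2) ^ 2 := by
    intro i j
    have hD : d i * d j - K i j ^ 2 ≠ 0 := by
      have h1 := hd1 i; have h2 := hd1 j; have h3 := abs_le.1 (hKb i j)
      have h4 : K i j ^ 2 ≤ 1 / 10000 := by nlinarith
      nlinarith
    have h1 := rankTwo_solve hH hl (a i) (a j) hD
    have h2 := rankTwo_solve hH hl (a j) (a i) (by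
      have e : (1 + a j ⬝ᵥ (H⁻¹ *ᵥ a j)) * (1 + a i ⬝ᵥ (H⁻¹ *ᵥ a i)) - (a j ⬝ᵥ (H⁻¹ *ᵥ a i)) ^ 2
          = d i * d j - K i j ^ 2 := by
        have := hKs i j; simp only [hK] at this; rw [← hR, this]; simp only [hd, hK]; ring
      rw [e]; exact hD)
    rw [add_right_comm] at h2
    rw [h1, h2]
    have hs := hKs i j
    have hs' := hLs i j
    change (d i * d j - K i j ^ 2)⁻¹ • (d j • (R *ᵥ a i) - K i j • (R *ᵥ a j)) ⬝ᵥ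
      (d j * d i - K j i ^ 2)⁻¹ • (d i • (R *ᵥ a j) - K j i • (R *ᵥ a i)) = _
    simp only [smul_dotProduct, dotProduct_smul, sub_dotProduct, dotProduct_sub, smul_eq_mul]
    change (d j * d i - K j i ^ 2)⁻¹ *
      (d i * ((d i * d j - K i j ^ 2)⁻¹ * (d j * L i j - K i j * L j j)) -
        K j i * ((d i * d j - K i j ^ 2)⁻¹ * (d j * L i i - K i j * L j i))) = _
    rw [hs, hs', mul_comm (d j) (d i)]
    field_simp
    ring
  simp only [hform]
  set e : Fin n → ℝ := fun i => m * π i * z i with he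
  set main : Fin n → Fin n → ℝ := fun i j => L i j / (d i * d j)
    - L i i / d i ^ 2 * (1 / d j) * K i j - 1 / d i * (L j j / d j ^ 2) * K i j with hmain
  set v := ∑ i, (e i * (1 / d i)) • a i with hv
  set v' := ∑ i, (e i * (L i i / d i ^ 2)) • a i with hv'
  have hmainsum : ∑ i, ∑ j, e i * e j * main i j =
      (R *ᵥ v) ⬝ᵥ (R *ᵥ v) - 2 * (v' ⬝ᵥ (R *ᵥ v)) := by
    have e1 : (R *ᵥ v) ⬝ᵥ (R *ᵥ v) = ∑ i, ∑ j, e i * e j * (L i j / (d i * d j)) := by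
      rw [hv, mulVec_sum_smul, sum_smul_dot_sum_smul]
      refine Finset.sum_congr rfl fun i _ => Finset.sum_congr rfl fun j _ => ?_
      simp only [hL]; ring_nf
    have e2 : v' ⬝ᵥ (R *ᵥ v) =
        ∑ i, ∑ j, e i * e j * (L i i / d i ^ 2 * (1 / d j) * K i j) := by
      rw [hv, hv', mulVec_sum_smul, sum_smul_dot_sum_smul]
      refine Finset.sum_congr rfl fun i _ => Finset.sum_congr rfl fun j _ => ?_
      simp only [hK]; ring
    have e3 : v' ⬝ᵥ (R *ᵥ v) =
        ∑ i, ∑ j, e i * e j * (1 / d i * (L j j / d j ^ 2) * K i j) := by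
      rw [e2, Finset.sum_comm]
      refine Finset.sum_congr rfl fun i _ => Finset.sum_congr rfl fun j _ => ?_
      rw [hKs i j]; ring
    have e4 : 2 * (v' ⬝ᵥ (R *ᵥ v)) = v' ⬝ᵥ (R *ᵥ v) + v' ⬝ᵥ (R *ᵥ v) := by ring
    rw [e4]
    nth_rewrite 1 [e2]
    rw [e1, e3]
    simp only [← Finset.sum_add_distrib, ← Finset.sum_sub_distrib]
    refine Finset.sum_congr rfl fun i _ => Finset.sum_congr rfl fun j _ => ?_
    simp only [hmain]; ring
  have hvv : v ⬝ᵥ v ≤ (21 * ε * Real.sqrt ρ) ^ 2 := by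
    have h := M.cancel (fun i => 1 / d i) 1 (10 * ε) (by
      intro i
      have h1 := hd1 i; have h2 := hd2 i
      rw [abs_le]
      constructor
      · rw [neg_le_sub_iff_le_add, ← sub_le_iff_le_add, le_div_iff₀ (by linarith)]
        nlinarith
      · have : 1 / d i ≤ 1 := by rw [div_le_one (by linarith)]; exact h1
        linarith)
    rw [mul_pow, Real.sq_sqrt hρ]
    refine h.trans_eq ?_
    rw [abs_one]; ring
  have hvv' : v' ⬝ᵥ v' ≤ (200 * ε * Real.sqrt ρ) ^ 2 := by
    have h := M.cancel (fun i => L i i / d i ^ 2) 0 (100 * ε) (by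
      intro i
      have h1 := hd1 i
      have h3 : 1 ≤ d i ^ 2 := by nlinarith
      rw [sub_zero, abs_div, abs_of_pos (by positivity : 0 < d i ^ 2), div_le_iff₀ (by positivity)]
      have := hLb i i
      nlinarith [abs_nonneg (L i i)])
    rw [mul_pow, Real.sq_sqrt hρ]
    refine h.trans_eq ?_
    rw [abs_zero]; ring
  have hRv : (R *ᵥ v) ⬝ᵥ (R *ᵥ v) ≤ (210 * ε * Real.sqrt ρ) ^ 2 := by
    have := hl.norm_inv_le (by norm_num) v
    rw [← hR] at this
    nlinarith
  have hsρ : Real.sqrt ρ ^ 2 = ρ := Real.sq_sqrt hρ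
  have hb1 : |(R *ᵥ v) ⬝ᵥ (R *ᵥ v)| ≤ 44100 * ε ^ 2 * ρ := by
    refine (abs_dot_le _ _ (by positivity) (by positivity) hRv hRv).trans_eq ?_
    linear_combination (44100 * ε ^ 2) * hsρ
  have hb2 : |v' ⬝ᵥ (R *ᵥ v)| ≤ 42000 * ε ^ 2 * ρ := by
    refine (abs_dot_le _ _ (by positivity) (by positivity) hvv' hRv).trans_eq ?_
    linear_combination (42000 * ε ^ 2) * hsρ
  have hrem : |∑ i, ∑ j, e i * e j * ((d i * d j * L i j - d j * K i j * L i i - d i * K i j * L j j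
      + K i j ^ 2 * L i j) / (d i * d j - K i j ^ 2) ^ 2) - ∑ i, ∑ j, e i * e j * main i j| ≤
      150000 * ε ^ 2 * ρ := by
    simp only [← Finset.sum_sub_distrib, ← mul_sub]
    calc _ ≤ ∑ i, ∑ j, (m * π i * |z i|) * (m * π j * |z j|) * (500 * ε * K i j ^ 2) := by
          refine (Finset.abs_sum_le_sum_abs _ _).trans (Finset.sum_le_sum fun i _ => ?_)
          refine (Finset.abs_sum_le_sum_abs _ _).trans (Finset.sum_le_sum fun j _ => ?_)
          rw [abs_mul]
          have hpi := M.pos i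
          have hpj := M.pos j
          have e1 : |e i * e j| = (m * π i * |z i|) * (m * π j * |z j|) := by
            simp only [he, abs_mul, Nat.abs_cast, abs_of_pos hpi, abs_of_pos hpj]
          rw [e1]
          refine mul_le_mul_of_nonneg_left ?_ (by positivity)
          have h1 := hd2 i; have h2 := hd2 j; have h3 := hKb i j
          exact offdiag_scalar (hd1 i) (by linarith) (hd1 j) (by linarith) (by linarith)
            (hLb i j) (hLb i i) (hLb j j)
      _ = 500 * ε * ∑ i, ∑ j, (m * π i * |z i|) * (m * π j * |z j|) * K i j ^ 2 := by
          simp only [Finset.mul_sum]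
          exact Finset.sum_congr rfl fun i _ => Finset.sum_congr rfl fun j _ => by ring
      _ ≤ 500 * ε * (300 * ε * ρ) :=
          mul_le_mul_of_nonneg_left (M.sum_sq_mul_sq_le hH hl) (by positivity)
      _ = _ := by ring
  rw [hmainsum] at hrem
  have h1 := abs_le.1 hrem
  have h2 := abs_le.1 hb1
  have h3 := abs_le.1 hb2
  have h4 : 0 ≤ ε ^ 2 * ρ := by positivity
  rw [abs_le]
  constructor <;> nlinarith

/-- Diagonal estimate for one fresh draw `b` with the remaining Gram matrix `H` held fixed: the
deviation of `‖(H + b bᵀ)⁻¹ b‖²` from `‖b‖²` is controlled by `‖(H - 1) b‖`. -/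
lemma diag_bound {H : Matrix (Fin p) (Fin p) ℝ} (hl : LowerBdd (1 / 10) H) {b : Fin p → ℝ}
    {ε s : ℝ} (hε : 0 < ε) (hs : 0 < s) (hb : b ⬝ᵥ b ≤ ε) :
    |((H + vecMulVec b b)⁻¹ *ᵥ b) ⬝ᵥ ((H + vecMulVec b b)⁻¹ *ᵥ b) - b ⬝ᵥ b| ≤
      2000 * ε ^ 2 + 1000 * (s * ε + ((H *ᵥ b - b) ⬝ᵥ (H *ᵥ b - b)) / s) := by
  have hτ : (0 : ℝ) < 1 / 10 := by norm_num
  rw [rankOne_solve hl]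
  set R := H⁻¹ with hR
  set k := b ⬝ᵥ (R *ᵥ b) with hk
  have hk0 : 0 ≤ k := hl.quad_inv_nonneg hτ b
  have hk1 : k ≤ 10 * ε := by have := hl.quad_inv_le hτ b; linarith
  set Lb := (R *ᵥ b) ⬝ᵥ (R *ᵥ b) with hLb
  have hL0 : 0 ≤ Lb := dot_self_nonneg _
  have hL1 : Lb ≤ 100 * ε := by have := hl.norm_inv_le hτ b; linarith
  rw [smul_dotProduct, dotProduct_smul, smul_eq_mul, smul_eq_mul, ← hLb]
  -- the rank-one factor `(1 + k)⁻²` costs a second-order term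
  have h1 : |(1 + k)⁻¹ * ((1 + k)⁻¹ * Lb) - Lb| ≤ 2000 * ε ^ 2 := by
    have e : (1 + k)⁻¹ * ((1 + k)⁻¹ * Lb) - Lb = -(Lb * (k * (2 + k) / (1 + k) ^ 2)) := by
      field_simp; ring
    rw [e, abs_neg, abs_of_nonneg (by positivity)]
    have : k * (2 + k) / (1 + k) ^ 2 ≤ 20 * ε := by
      rw [div_le_iff₀ (by positivity)]
      calc k * (2 + k) ≤ (10 * ε) * (2 * (1 + k) ^ 2) := by
            refine mul_le_mul hk1 ?_ (by positivity) (by positivity)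
            nlinarith
        _ = _ := by ring
    calc Lb * (k * (2 + k) / (1 + k) ^ 2) ≤ 100 * ε * (20 * ε) := by gcongr
      _ = _ := by ring
  -- `‖R b‖² - ‖b‖² = (R b - b) · (R b + b)` and `R b - b = - R (H b - b)`
  have h2 : |Lb - b ⬝ᵥ b| ≤ 1000 * (s * ε + ((H *ᵥ b - b) ⬝ᵥ (H *ᵥ b - b)) / s) := by
    set y := H *ᵥ b - b with hy
    have hRy : R *ᵥ y = b - R *ᵥ b := by
      rw [hy, mulVec_sub, inv_mulVec_eq (hl.isUnit_det hτ) rfl]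
    have hRy2 : (R *ᵥ y) ⬝ᵥ (R *ᵥ y) ≤ 100 * (y ⬝ᵥ y) := by
      have := hl.norm_inv_le hτ y; linarith
    have e : Lb - b ⬝ᵥ b = -((R *ᵥ y) ⬝ᵥ (R *ᵥ b + b)) := by
      rw [hRy, sub_dotProduct, dotProduct_add, dotProduct_add, hLb, dotProduct_comm (R *ᵥ b) b]
      ring
    have hw : (R *ᵥ b + b) ⬝ᵥ (R *ᵥ b + b) ≤ 202 * ε := by
      have h3 := dot_self_nonneg (R *ᵥ b - b)
      simp only [add_dotProduct, dotProduct_add, sub_dotProduct, dotProduct_sub] at h3 ⊢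
      rw [← hLb] at h3 ⊢
      linarith
    have hcs := dot_cauchy (R *ᵥ y) (R *ᵥ b + b)
    have hy0 := dot_self_nonneg y
    have hsum : 0 ≤ s * ε + (y ⬝ᵥ y) / s := by positivity
    rw [e, abs_neg]
    apply abs_le_of_sq_le_sq _ (by positivity)
    have h4 : ((R *ᵥ y) ⬝ᵥ (R *ᵥ b + b)) ^ 2 ≤ 100 * (y ⬝ᵥ y) * (202 * ε) :=
      hcs.trans (mul_le_mul hRy2 hw (dot_self_nonneg _) (by positivity))
    have h5 : 4 * (ε * (y ⬝ᵥ y)) ≤ (s * ε + (y ⬝ᵥ y) / s) ^ 2 := by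
      have h6 := sq_nonneg (s * ε - (y ⬝ᵥ y) / s)
      have e7 : s * ε * ((y ⬝ᵥ y) / s) = ε * (y ⬝ᵥ y) := by field_simp
      nlinarith
    nlinarith
  calc _ ≤ |(1 + k)⁻¹ * ((1 + k)⁻¹ * Lb) - Lb| + |Lb - b ⬝ᵥ b| := abs_sub_le _ _ _
    _ ≤ _ := add_le_add h1 h2

end det

/-! ### Variance of the Gram matrix and a priori bounds -/

section badEvents
variable {n p m : ℕ} (a : Fin n → Fin p → ℝ) (ω : Fin m → Fin n)

lemma badInd_nonneg (I : Finset (Fin m)) : 0 ≤ badInd a ω I := by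
  unfold badInd; split_ifs <;> norm_num

lemma badInd_le_one (I : Finset (Fin m)) : badInd a ω I ≤ 1 := by
  unfold badInd; split_ifs <;> norm_num

variable {a ω}

lemma badInd_of_good {I : Finset (Fin m)} (h : LowerBdd (1 / 10) (gramOn a ω I)) :
    badInd a ω I = 0 := if_pos h

lemma badInd_of_bad {I : Finset (Fin m)} (h : ¬ LowerBdd (1 / 10) (gramOn a ω I)) :
    badInd a ω I = 1 := if_neg h

variable (a ω)

lemma badInd_anti {I J : Finset (Fin m)} (hIJ : I ⊆ J) : badInd a ω J ≤ badInd a ω I := by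
  by_cases h : LowerBdd (1 / 10) (gramOn a ω I)
  · rw [badInd_of_good h, badInd_of_good (LowerBdd.gram_mono a ω hIJ h)]
  · rw [badInd_of_bad h]; exact badInd_le_one a ω J

lemma badInd_update {I : Finset (Fin m)} {s : Fin m} (hs : s ∉ I) (i : Fin n) :
    badInd a (Function.update ω s i) I = badInd a ω I := by
  unfold badInd; rw [gramOn_update a ω hs]

end badEvents

section variance
variable {n p m : ℕ} {π : Fin n → ℝ} {a : Fin n → Fin p → ℝ} {z : Fin n → ℝ} {ε ρ : ℝ}

/-- Variance of the sampled Gram matrix applied to a fixed vector: the centred summands are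
uncorrelated, so the variances add up. -/
lemma WhitenedModel.variance_gramOn (M : WhitenedModel m π a z ε ρ) (u : Fin p → ℝ)
    (I : Finset (Fin m)) :
    expec π (fun ω => (gramOn a ω I *ᵥ u - (I.card : ℝ) • ∑ i, (π i * (a i ⬝ᵥ u)) • a i) ⬝ᵥ
      (gramOn a ω I *ᵥ u - (I.card : ℝ) • ∑ i, (π i * (a i ⬝ᵥ u)) • a i)) ≤
      I.card * (ε * (1 + ε) / m * (u ⬝ᵥ u)) := by
  set μ := ∑ i, (π i * (a i ⬝ᵥ u)) • a i with hμ
  have hm : (0 : ℝ) < m := by exact_mod_cast M.m_pos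
  have hε := M.eps_pos
  induction I using Finset.induction_on with
  | empty => simp [gramOn, expec]
  | insert s I hs ih =>
    rw [expec_resample M.sum_one s]
    rw [Finset.card_insert_of_notMem hs]
    push_cast
    have hstep : ∀ ω : Fin m → Fin n, ∑ i, π i *
        ((gramOn a (Function.update ω s i) (insert s I) *ᵥ u - ((I.card : ℝ) + 1) • μ) ⬝ᵥ
          (gramOn a (Function.update ω s i) (insert s I) *ᵥ u - ((I.card : ℝ) + 1) • μ)) ≤
        (gramOn a ω I *ᵥ u - (I.card : ℝ) • μ) ⬝ᵥ (gramOn a ω I *ᵥ u - (I.card : ℝ) • μ) +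
          ε * (1 + ε) / m * (u ⬝ᵥ u) := by
      intro ω
      set x := gramOn a ω I *ᵥ u - (I.card : ℝ) • μ with hx
      have e1 : ∀ i, gramOn a (Function.update ω s i) (insert s I) *ᵥ u - ((I.card : ℝ) + 1) • μ =
          x + ((a i ⬝ᵥ u) • a i - μ) := by
        intro i
        rw [gramOn_insert a _ hs, gramOn_update a ω hs, add_mulVec, vecMulVec_mulVec',
          Function.update_self, hx, add_smul, one_smul]
        abel
      have e2 : ∀ i, π i * ((x + ((a i ⬝ᵥ u) • a i - μ)) ⬝ᵥ (x + ((a i ⬝ᵥ u) • a i - μ))) =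
          π i * (x ⬝ᵥ x - 2 * (x ⬝ᵥ μ) + μ ⬝ᵥ μ) +
          2 * ((π i * (a i ⬝ᵥ u)) * (x ⬝ᵥ a i)) - 2 * ((π i * (a i ⬝ᵥ u)) * (μ ⬝ᵥ a i)) +
          π i * ((a i ⬝ᵥ u) ^ 2 * (a i ⬝ᵥ a i)) := by
        intro i
        simp only [add_dotProduct, dotProduct_add, sub_dotProduct, dotProduct_sub,
          smul_dotProduct, dotProduct_smul, smul_eq_mul, dotProduct_comm _ x,
          dotProduct_comm (a i) μ]
        ring
      have e3 : ∀ w : Fin p → ℝ, ∑ i, (π i * (a i ⬝ᵥ u)) * (w ⬝ᵥ a i) = w ⬝ᵥ μ := by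
        intro w
        rw [hμ, dotProduct_sum]
        exact Finset.sum_congr rfl fun i _ => by rw [dotProduct_smul, smul_eq_mul]
      simp only [e1, e2]
      rw [Finset.sum_add_distrib, Finset.sum_sub_distrib, Finset.sum_add_distrib,
        ← Finset.sum_mul, M.sum_one, ← Finset.mul_sum, ← Finset.mul_sum, e3, e3]
      have h4 : ∑ i, π i * ((a i ⬝ᵥ u) ^ 2 * (a i ⬝ᵥ a i)) ≤ ε * (1 + ε) / m * (u ⬝ᵥ u) := by
        have h5 : ∑ i, π i * (a i ⬝ᵥ u) ^ 2 ≤ (1 + ε) / m * (u ⬝ᵥ u) := by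
          have := M.up u
          rw [div_mul_eq_mul_div, le_div_iff₀ hm]
          linarith
        calc _ ≤ ∑ i, ε * (π i * (a i ⬝ᵥ u) ^ 2) := by
              refine Finset.sum_le_sum fun i _ => ?_
              have h6 : 0 ≤ π i * (a i ⬝ᵥ u) ^ 2 := by have := M.pos i; positivity
              nlinarith [mul_le_mul_of_nonneg_left (M.norm_le i) h6]
          _ = ε * ∑ i, π i * (a i ⬝ᵥ u) ^ 2 := by rw [Finset.mul_sum]
          _ ≤ ε * ((1 + ε) / m * (u ⬝ᵥ u)) := mul_le_mul_of_nonneg_left h5 hε.le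
          _ = _ := by ring
      have h5 := dot_self_nonneg μ
      linarith
    refine (expec_mono M.pos hstep).trans ?_
    rw [expec_add, expec_const M.sum_one]
    linarith

lemma dot_add_le {k : ℕ} (x y : Fin k → ℝ) :
    (x + y) ⬝ᵥ (x + y) ≤ 2 * (x ⬝ᵥ x) + 2 * (y ⬝ᵥ y) := by
  have h := dot_self_nonneg (x - y)
  simp only [add_dotProduct, dotProduct_add, sub_dotProduct, dotProduct_sub] at h ⊢
  linarith

/-- The Gram matrix of all draws but one is close to the identity in mean square on each fixed
vector. -/
lemma WhitenedModel.mean_sq_gramOn (M : WhitenedModel m π a z ε ρ) (u : Fin p → ℝ) (s : Fin m) :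
    expec π (fun ω => (gramOn a ω (univ.erase s) *ᵥ u - u) ⬝ᵥ
      (gramOn a ω (univ.erase s) *ᵥ u - u)) ≤ 4 * ε * (u ⬝ᵥ u) := by
  have hm : (0 : ℝ) < m := by exact_mod_cast M.m_pos
  have hε := M.eps_pos
  have hε' := M.eps_le
  have hu := dot_self_nonneg u
  have hvar := M.variance_gramOn u (univ.erase s)
  have havg := M.avg u
  set μ := ∑ i, (π i * (a i ⬝ᵥ u)) • a i with hμ
  have hmμ : ∑ i, (m * π i * (a i ⬝ᵥ u)) • a i = (m : ℝ) • μ := by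
    rw [hμ, Finset.smul_sum]
    exact Finset.sum_congr rfl fun i _ => by rw [smul_smul, mul_assoc]
  rw [hmμ] at havg
  have hcard : ((univ.erase s : Finset (Fin m)).card : ℝ) = m - 1 := by
    rw [Finset.card_erase_of_mem (Finset.mem_univ s), Finset.card_univ, Fintype.card_fin,
      Nat.cast_sub M.m_pos, Nat.cast_one]
  rw [hcard] at hvar
  have hμ2 : μ ⬝ᵥ μ ≤ 3 * ε ^ 2 * (u ⬝ᵥ u) := by
    have h1 := dot_add_le ((m : ℝ) • μ - u) u
    rw [sub_add_cancel, smul_dotProduct, dotProduct_smul, smul_eq_mul, smul_eq_mul] at h1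
    have h2 : m * (m * (μ ⬝ᵥ μ)) ≤ 3 * (u ⬝ᵥ u) := by
      have h6 : ε ^ 2 ≤ 1 / 2 := by nlinarith
      have := mul_le_mul_of_nonneg_right h6 hu
      linarith
    have h3 : 1 ≤ ε * m := by
      have := M.inv_m_le; rwa [div_le_iff₀ hm] at this
    have h4 : 1 ≤ (ε * m) ^ 2 := by nlinarith
    have h5 := dot_self_nonneg μ
    calc μ ⬝ᵥ μ ≤ (ε * m) ^ 2 * (μ ⬝ᵥ μ) := le_mul_of_one_le_left h5 h4
      _ = ε ^ 2 * (m * (m * (μ ⬝ᵥ μ))) := by ring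
      _ ≤ ε ^ 2 * (3 * (u ⬝ᵥ u)) := by gcongr
      _ = _ := by ring
  have hbias : (((m : ℝ) - 1) • μ - u) ⬝ᵥ (((m : ℝ) - 1) • μ - u) ≤ 8 * ε ^ 2 * (u ⬝ᵥ u) := by
    have h1 := dot_add_le ((m : ℝ) • μ - u) (-μ)
    rw [neg_dotProduct, dotProduct_neg, neg_neg] at h1
    have e : ((m : ℝ) - 1) • μ - u = (m : ℝ) • μ - u + -μ := by
      rw [sub_smul, one_smul]; abel
    rw [e]; linarith
  calc _ ≤ expec π (fun ω => 2 * ((gramOn a ω (univ.erase s) *ᵥ u - ((m : ℝ) - 1) • μ) ⬝ᵥ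
        (gramOn a ω (univ.erase s) *ᵥ u - ((m : ℝ) - 1) • μ)) + 16 * ε ^ 2 * (u ⬝ᵥ u)) := by
        refine expec_mono M.pos fun ω => ?_
        have h1 := dot_add_le (gramOn a ω (univ.erase s) *ᵥ u - ((m : ℝ) - 1) • μ)
          (((m : ℝ) - 1) • μ - u)
        rw [sub_add_sub_cancel] at h1
        linarith
    _ ≤ 2 * ((m - 1) * (ε * (1 + ε) / m * (u ⬝ᵥ u))) + 16 * ε ^ 2 * (u ⬝ᵥ u) := by
        rw [expec_add, expec_const M.sum_one, expec_const_mul]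
        linarith
    _ ≤ 2 * (ε * (1 + ε) * (u ⬝ᵥ u)) + 16 * ε ^ 2 * (u ⬝ᵥ u) := by
        have e : ε * (1 + ε) * (u ⬝ᵥ u) = m * (ε * (1 + ε) / m * (u ⬝ᵥ u)) := by
          field_simp
        rw [e]
        have : 0 ≤ ε * (1 + ε) / m * (u ⬝ᵥ u) := by positivity
        linarith
    _ ≤ _ := by
        have : ε ^ 2 ≤ 1 / 1000 * ε := by nlinarith
        nlinarith [mul_le_mul_of_nonneg_right this hu]

end variance

section bulk
variable {n p m : ℕ} (a : Fin n → Fin p → ℝ) (z : Fin n → ℝ) (ω : Fin m → Fin n)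

/-- Deterministic a priori bound: on the event that the Gram matrix is well conditioned, partial
solutions are bounded by the sampled response energy. -/
lemma partial_solution_le (hl : LowerBdd (1 / 10) (gramOn a ω univ)) (I : Finset (Fin m)) :
    ((gramOn a ω univ)⁻¹ *ᵥ ∑ s ∈ I, z (ω s) • a (ω s)) ⬝ᵥ
      ((gramOn a ω univ)⁻¹ *ᵥ ∑ s ∈ I, z (ω s) • a (ω s)) ≤ 10 * ∑ s, z (ω s) ^ 2 := by
  set G := gramOn a ω univ with hG
  set g := ∑ s ∈ I, z (ω s) • a (ω s) with hg
  set x := G⁻¹ *ᵥ g with hx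
  have hGx : G *ᵥ x = g := mulVec_inv_cancel (hl.isUnit_det (by norm_num)) g
  have h1 := hl x
  have hquad : x ⬝ᵥ (G *ᵥ x) = ∑ s, (a (ω s) ⬝ᵥ x) ^ 2 := gramOn_quad a ω univ x
  have h2 : x ⬝ᵥ (G *ᵥ x) = ∑ s ∈ I, z (ω s) * (a (ω s) ⬝ᵥ x) := by
    rw [hGx, hg, dotProduct_sum]
    exact Finset.sum_congr rfl fun s _ => by
      rw [dotProduct_smul, smul_eq_mul, dotProduct_comm]
  set Q := x ⬝ᵥ (G *ᵥ x) with hQ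
  have h3 : Q ≤ ∑ s, (z (ω s) ^ 2 + (a (ω s) ⬝ᵥ x) ^ 2) / 2 := by
    rw [h2]
    calc _ ≤ ∑ s ∈ I, (z (ω s) ^ 2 + (a (ω s) ⬝ᵥ x) ^ 2) / 2 :=
          Finset.sum_le_sum fun s _ => by nlinarith [sq_nonneg (z (ω s) - a (ω s) ⬝ᵥ x)]
      _ ≤ _ := Finset.sum_le_sum_of_subset_of_nonneg (Finset.subset_univ _)
          fun s _ _ => by positivity
  rw [← Finset.sum_div, Finset.sum_add_distrib, ← hquad] at h3
  linarith

end bulk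

/-! ### Diagonal and off-diagonal terms, and the block decomposition -/

section pairs
variable {n p m : ℕ} {π : Fin n → ℝ} {a : Fin n → Fin p → ℝ} {z : Fin n → ℝ} {ε ρ P : ℝ}

/-- The contribution of the draws `s` and `t` to the squared norm of the solution of the sampled
normal equations. -/
def pairTerm {n p m : ℕ} (a : Fin n → Fin p → ℝ) (z : Fin n → ℝ) (ω : Fin m → Fin n)
    (s t : Fin m) : ℝ :=
  z (ω s) * z (ω t) * (((gramOn a ω univ)⁻¹ *ᵥ a (ω s)) ⬝ᵥ ((gramOn a ω univ)⁻¹ *ᵥ a (ω t)))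

lemma gramOn_univ_update (ω : Fin m → Fin n) (s : Fin m) (i : Fin n) :
    gramOn a (Function.update ω s i) univ =
      gramOn a ω (univ.erase s) + vecMulVec (a i) (a i) := by
  rw [← Finset.insert_erase (Finset.mem_univ s), gramOn_insert a _ (Finset.notMem_erase s univ),
    gramOn_update a ω (Finset.notMem_erase s univ), Function.update_self,
    Finset.erase_insert (Finset.notMem_erase s univ)]

/-- Diagonal contributions: a single draw contributes `z² ‖a‖²` up to relative error
`O(ε^{3/2} + P)`. -/
lemma WhitenedModel.diag_term (M : WhitenedModel m π a z ε ρ) {I : Finset (Fin m)} {s : Fin m}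
    (hs : s ∉ I) (hP : expec π (fun ω => badInd a ω I) ≤ P) :
    |expec π (fun ω => (1 - badInd a ω I) * pairTerm a z ω s s) -
      ∑ i, π i * z i ^ 2 * (a i ⬝ᵥ a i)| ≤
      (∑ i, π i * z i ^ 2) * (7000 * (ε * Real.sqrt ε) + P * ε) := by
  have hε := M.eps_pos
  have hε' := M.eps_le
  set r := Real.sqrt ε with hr
  have hr0 : 0 < r := Real.sqrt_pos.2 hε
  have hr2 : r * r = ε := Real.mul_self_sqrt hε.le
  have hr1 : r ≤ 1 := by nlinarith
  set D : Fin n → (Fin m → Fin n) → ℝ := fun i ω =>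
    (gramOn a ω (univ.erase s) *ᵥ a i - a i) ⬝ᵥ (gramOn a ω (univ.erase s) *ᵥ a i - a i) with hD
  rw [expec_resample M.sum_one s]
  have hpt : ∀ ω : Fin m → Fin n,
      |(∑ i, π i * ((1 - badInd a (Function.update ω s i) I) *
        pairTerm a z (Function.update ω s i) s s)) - ∑ i, π i * z i ^ 2 * (a i ⬝ᵥ a i)| ≤
      ∑ i, π i * z i ^ 2 * (2000 * ε ^ 2 + 1000 * (r * ε + D i ω / r) + badInd a ω I * ε) := by
    intro ω
    rw [← Finset.sum_sub_distrib]
    refine (Finset.abs_sum_le_sum_abs _ _).trans (Finset.sum_le_sum fun i _ => ?_)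
    have hw : 0 ≤ π i * z i ^ 2 := by have := M.pos i; positivity
    rw [badInd_update a ω hs]
    unfold pairTerm
    rw [gramOn_univ_update, Function.update_self]
    by_cases hg : LowerBdd (1 / 10) (gramOn a ω I)
    · have hIs : I ⊆ univ.erase s := fun t ht =>
        Finset.mem_erase.2 ⟨fun h => hs (h ▸ ht), Finset.mem_univ t⟩
      have h1 := diag_bound (LowerBdd.gram_mono a ω hIs hg) hε hr0 (M.norm_le i)
      rw [badInd_of_good hg]
      set q := ((gramOn a ω (univ.erase s) + vecMulVec (a i) (a i))⁻¹ *ᵥ a i) ⬝ᵥ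
        ((gramOn a ω (univ.erase s) + vecMulVec (a i) (a i))⁻¹ *ᵥ a i)
      have e : π i * ((1 - 0) * (z i * z i * q)) - π i * z i ^ 2 * (a i ⬝ᵥ a i) =
          π i * z i ^ 2 * (q - a i ⬝ᵥ a i) := by ring
      rw [e, abs_mul, abs_of_nonneg hw, zero_mul, add_zero]
      exact mul_le_mul_of_nonneg_left h1 hw
    · rw [badInd_of_bad hg, sub_self, zero_mul, mul_zero, zero_sub, abs_neg, abs_mul,
        abs_of_nonneg hw, abs_of_nonneg (dot_self_nonneg _), one_mul]
      refine mul_le_mul_of_nonneg_left ?_ hw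
      have h1 := M.norm_le i
      have h2 : 0 ≤ D i ω := dot_self_nonneg _
      have h3 : 0 ≤ 2000 * ε ^ 2 + 1000 * (r * ε + D i ω / r) := by positivity
      linarith
  have hconst : ∀ F : (Fin m → Fin n) → ℝ, ∀ c : ℝ, expec π F - c = expec π (fun ω => F ω - c) :=
    fun F c => by rw [expec_sub, expec_const M.sum_one]
  rw [hconst]
  refine (abs_expec_le M.pos _).trans ((expec_mono M.pos hpt).trans ?_)
  rw [expec_sum, Finset.sum_mul]
  refine Finset.sum_le_sum fun i _ => ?_
  have hw : 0 ≤ π i * z i ^ 2 := by have := M.pos i; positivity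
  rw [expec_const_mul]
  refine mul_le_mul_of_nonneg_left ?_ hw
  have hDi : expec π (D i) ≤ 4 * ε * ε :=
    (M.mean_sq_gramOn (a i) s).trans (mul_le_mul_of_nonneg_left (M.norm_le i) (by positivity))
  have e : expec π (fun ω => 2000 * ε ^ 2 + 1000 * (r * ε + D i ω / r) + badInd a ω I * ε) =
      2000 * ε ^ 2 + 1000 * (r * ε) + 1000 / r * expec π (D i) +
        ε * expec π (fun ω => badInd a ω I) := by
    rw [← expec_const_mul, ← expec_const_mul, ← expec_const M.sum_one (m := m)
      (2000 * ε ^ 2 + 1000 * (r * ε)), ← expec_add, ← expec_add]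
    congr 1; funext ω; ring
  rw [e]
  have h1 : 1000 / r * expec π (D i) ≤ 4000 * (ε * r) := by
    calc _ ≤ 1000 / r * (4 * ε * ε) := mul_le_mul_of_nonneg_left hDi (by positivity)
      _ = 1000 / r * (4 * ε * (r * r)) := by rw [hr2]
      _ = _ := by field_simp; ring
  have h2 : ε ^ 2 ≤ ε * r := by nlinarith
  have h3 := mul_le_mul_of_nonneg_left hP hε.le
  linarith

/-- Off-diagonal contributions: two distinct draws contribute at second order only. -/
lemma WhitenedModel.offdiag_term (M : WhitenedModel m π a z ε ρ) {I : Finset (Fin m)}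
    {s t : Fin m} (hst : s ≠ t) (hs : s ∉ I) (ht : t ∉ I) :
    |expec π (fun ω => (1 - badInd a ω I) * pairTerm a z ω s t)| ≤
      300000 * ε ^ 2 * ρ / m ^ 2 := by
  have hm : (0 : ℝ) < m := by exact_mod_cast M.m_pos
  have hε := M.eps_pos
  have hρ := M.rho_nonneg
  rw [expec_resample M.sum_one t, expec_resample M.sum_one s]
  refine (abs_expec_le M.pos _).trans ?_
  refine (expec_mono M.pos (F' := fun _ => 300000 * ε ^ 2 * ρ / m ^ 2) fun ω => ?_).trans_eq
    (expec_const M.sum_one _)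
  have hG : ∀ i j, gramOn a (Function.update (Function.update ω s i) t j) univ =
      gramOn a ω ((univ.erase t).erase s) + vecMulVec (a i) (a i) + vecMulVec (a j) (a j) := by
    intro i j
    rw [gramOn_univ_update]
    have hmem : s ∈ univ.erase t := Finset.mem_erase.2 ⟨hst, Finset.mem_univ s⟩
    have hn := Finset.notMem_erase s (univ.erase t)
    rw [← Finset.insert_erase hmem, gramOn_insert a _ hn, gramOn_update a ω hn,
      Function.update_self, Finset.erase_insert hn]
  unfold pairTerm
  simp only [hG, badInd_update a _ ht, badInd_update a _ hs, Function.update_self,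
    Function.update_of_ne hst]
  by_cases hg : LowerBdd (1 / 10) (gramOn a ω I)
  · have hIs : I ⊆ (univ.erase t).erase s := fun k hk =>
      Finset.mem_erase.2 ⟨fun h => hs (h ▸ hk), Finset.mem_erase.2
        ⟨fun h => ht (h ▸ hk), Finset.mem_univ k⟩⟩
    have h1 := M.offdiag (gramOn_symm a ω _) (LowerBdd.gram_mono a ω hIs hg)
    rw [badInd_of_good hg, le_div_iff₀ (by positivity)]
    refine le_trans (le_of_eq ?_) h1
    rw [← abs_of_pos (by positivity : (0 : ℝ) < m ^ 2), ← abs_mul]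
    congr 1
    rw [Finset.sum_mul]
    refine Finset.sum_congr rfl fun i _ => ?_
    rw [Finset.mul_sum, Finset.sum_mul]
    refine Finset.sum_congr rfl fun j _ => ?_
    ring
  · rw [badInd_of_bad hg]
    simp only [sub_self, zero_mul, mul_zero, Finset.sum_const_zero, abs_zero]
    positivity

/-- The sampled response energy carried by a badly conditioned event is of the order of its
probability, since a single draw can be removed from the Gram matrix. -/
lemma WhitenedModel.energy_bad (M : WhitenedModel m π a z ε ρ) {J : Finset (Fin m)}
    (hP : ∀ s, expec π (fun ω => badInd a ω (J.erase s)) ≤ P) :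
    expec π (fun ω => (∑ s, z (ω s) ^ 2) * badInd a ω J) ≤ 2 * ρ * P := by
  have hm : (0 : ℝ) < m := by exact_mod_cast M.m_pos
  have hs : ∀ s : Fin m, expec π (fun ω => z (ω s) ^ 2 * badInd a ω J) ≤
      (∑ i, π i * z i ^ 2) * P := by
    intro s
    calc _ ≤ expec π (fun ω => z (ω s) ^ 2 * badInd a ω (J.erase s)) :=
          expec_mono M.pos fun ω => mul_le_mul_of_nonneg_left
            (badInd_anti a ω (Finset.erase_subset s J)) (sq_nonneg _)
      _ = expec π (fun ω => (∑ i, π i * z i ^ 2) * badInd a ω (J.erase s)) := by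
          rw [expec_resample M.sum_one s]
          congr 1; funext ω
          rw [Finset.sum_mul]
          refine Finset.sum_congr rfl fun i _ => ?_
          rw [badInd_update a ω (Finset.notMem_erase s J), Function.update_self]
          ring
      _ ≤ _ := by
          rw [expec_const_mul]
          refine mul_le_mul_of_nonneg_left (hP s) (Finset.sum_nonneg fun i _ => ?_)
          have := M.pos i; positivity
  simp only [Finset.sum_mul]
  rw [expec_sum]
  have hP0 : 0 ≤ P := by
    refine le_trans ?_ (hP ⟨0, M.m_pos⟩)
    exact Finset.sum_nonneg fun ω _ =>
      mul_nonneg (samplingP_nonneg M.pos ω) (badInd_nonneg a ω _)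
  calc _ ≤ ∑ _s : Fin m, (∑ i, π i * z i ^ 2) * P := Finset.sum_le_sum fun s _ => hs s
    _ = (m * ∑ i, π i * z i ^ 2) * P := by
        rw [Finset.sum_const, Finset.card_univ, Fintype.card_fin, nsmul_eq_mul]; ring
    _ ≤ _ := mul_le_mul_of_nonneg_right M.resp hP0

end pairs

section blocks
variable {n p m : ℕ} {π : Fin n → ℝ} {a : Fin n → Fin p → ℝ} {z : Fin n → ℝ} {ε ρ P : ℝ}

/-- Colour of a draw: the residue of its index modulo `3`. -/
def colour {m : ℕ} (s : Fin m) : Fin 3 := ⟨s % 3, Nat.mod_lt _ (by norm_num)⟩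

/-- The block of all draws of a given colour. -/
def block (m : ℕ) (b : Fin 3) : Finset (Fin m) := univ.filter fun s => colour s = b

lemma mem_block {s : Fin m} {b : Fin 3} : s ∈ block m b ↔ colour s = b := by
  simp [block]

/-- Removing one index from a block of the partition into thirds still leaves a quarter of all
draws. -/
lemma card_block_erase (hm : 1000 ≤ m) (b : Fin 3) (s : Fin m) :
    m ≤ 4 * ((block m b).erase s).card := by
  have h1 : m / 3 ≤ (block m b).card := by
    have hb := b.isLt
    let f : Fin (m / 3) → Fin m := fun k => ⟨3 * k + b, by have := k.isLt; omega⟩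
    have hf : Function.Injective f := fun k l h => by
      have := congrArg Fin.val h
      simp only [f] at this
      exact Fin.ext (by omega)
    calc m / 3 = (univ.image f).card := by
          rw [Finset.card_image_of_injective _ hf, Finset.card_univ, Fintype.card_fin]
      _ ≤ _ := Finset.card_le_card fun x hx => by
          obtain ⟨k, -, rfl⟩ := Finset.mem_image.1 hx
          rw [mem_block]
          apply Fin.ext
          simp only [colour, f]
          omega
  have h2 := Finset.pred_card_le_card_erase (s := block m b) (a := s)
  omega

lemma abs_prod_one_sub_sub_one_le {u : Fin 3 → ℝ} (hn : ∀ k, 0 ≤ u k) (ho : ∀ k, u k ≤ 1) :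
    |∏ k, (1 - u k) - 1| ≤ ∑ k, u k := by
  simp only [Fin.prod_univ_three, Fin.sum_univ_three]
  have h0 := hn 0; have h1 := hn 1; have h2 := hn 2
  have g0 := ho 0; have g1 := ho 1; have g2 := ho 2
  have h01 : 0 ≤ (1 - u 0) * (1 - u 1) := mul_nonneg (by linarith) (by linarith)
  have h01' : (1 - u 0) * (1 - u 1) ≤ 1 := by nlinarith
  rw [abs_le]
  constructor <;> nlinarith

/-- Main estimate for the whitened model. Off the event that one of the three blocks of draws is
badly conditioned, the squared norm of the solution of the sampled normal equations has mean
`m ∑ π_i z_i² ‖a_i‖²` up to an error `O((ε^{3/2} + P) ρ)`. -/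
theorem WhitenedModel.main_estimate (M : WhitenedModel m π a z ε ρ)
    (hP : ∀ I : Finset (Fin m), m ≤ 4 * I.card → expec π (fun ω => badInd a ω I) ≤ P) :
    |expec π (fun ω => (∏ b : Fin 3, (1 - badInd a ω (block m b))) *
        (((gramOn a ω univ)⁻¹ *ᵥ ∑ s, z (ω s) • a (ω s)) ⬝ᵥ
          ((gramOn a ω univ)⁻¹ *ᵥ ∑ s, z (ω s) • a (ω s)))) -
      m * ∑ i, π i * z i ^ 2 * (a i ⬝ᵥ a i)| ≤
      (320000 * (ε * Real.sqrt ε) + 600 * P) * ρ := by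
  have hε := M.eps_pos
  have hε' := M.eps_le
  have hρ := M.rho_nonneg
  have hm : (0 : ℝ) < m := by exact_mod_cast M.m_pos
  have hm1 : 1000 ≤ m := by
    have h1 := M.inv_m_le.trans hε'
    rw [div_le_div_iff₀ hm (by norm_num)] at h1
    have : (1000 : ℝ) ≤ m := by linarith
    exact_mod_cast this
  have hPb : ∀ b s, expec π (fun ω => badInd a ω ((block m b).erase s)) ≤ P :=
    fun b s => hP _ (card_block_erase hm1 b s)
  have hPb' : ∀ b, expec π (fun ω => badInd a ω (block m b)) ≤ P := by
    intro b
    refine le_trans ?_ (hPb b ⟨0, M.m_pos⟩)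
    exact expec_mono M.pos fun ω => badInd_anti a ω (Finset.erase_subset _ (block m b))
  have hP0 : 0 ≤ P := by
    refine le_trans ?_ (hPb' 0)
    exact Finset.sum_nonneg fun ω _ =>
      mul_nonneg (samplingP_nonneg M.pos ω) (badInd_nonneg a ω _)
  -- two draws never meet all three colours
  have hthird : ∀ b c : Fin 3, ∃ e : Fin 3, b ≠ e ∧ c ≠ e := by decide
  choose e he1 he2 using hthird
  set χ : (Fin m → Fin n) → ℝ := fun ω => ∏ b : Fin 3, (1 - badInd a ω (block m b)) with hχ
  set x : (Fin m → Fin n) → Fin 3 → Fin p → ℝ := fun ω b =>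
    (gramOn a ω univ)⁻¹ *ᵥ ∑ s ∈ block m b, z (ω s) • a (ω s) with hx
  have hsumx : ∀ ω : Fin m → Fin n,
      (gramOn a ω univ)⁻¹ *ᵥ ∑ s, z (ω s) • a (ω s) = ∑ b, x ω b := by
    intro ω
    simp only [hx]
    rw [← mulVec_sum]
    congr 1
    exact (Finset.sum_fiberwise univ colour _).symm
  have hpair : ∀ (ω : Fin m → Fin n) (b c : Fin 3),
      x ω b ⬝ᵥ x ω c = ∑ s ∈ block m b, ∑ t ∈ block m c, pairTerm a z ω s t := by
    intro ω b c
    simp only [hx, pairTerm]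
    rw [mulVec_sum, mulVec_sum, sum_dotProduct]
    refine Finset.sum_congr rfl fun s _ => ?_
    rw [dotProduct_sum]
    refine Finset.sum_congr rfl fun t _ => ?_
    rw [mulVec_smul, mulVec_smul, smul_dotProduct, dotProduct_smul, smul_eq_mul, smul_eq_mul,
      mul_assoc]
  -- replacing the indicator of all blocks by that of the block avoiding both draws
  have hrep : ∀ b c : Fin 3, |expec π (fun ω => χ ω * (x ω b ⬝ᵥ x ω c)) -
      expec π (fun ω => (1 - badInd a ω (block m (e b c))) * (x ω b ⬝ᵥ x ω c))| ≤
      60 * ρ * P := by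
    intro b c
    rw [← expec_sub]
    refine (abs_expec_le M.pos _).trans ?_
    calc _ ≤ expec π (fun ω => 10 * ∑ k : Fin 3,
          ((∑ s, z (ω s) ^ 2) * badInd a ω (block m k))) := by
          refine expec_mono M.pos fun ω => ?_
          rw [← sub_mul, ← Finset.mul_sum]
          have hY : 0 ≤ ∑ s, z (ω s) ^ 2 := Finset.sum_nonneg fun s _ => sq_nonneg _
          by_cases hg : LowerBdd (1 / 10) (gramOn a ω (block m (e b c)))
          · have hl := LowerBdd.gram_mono a ω (Finset.subset_univ _) hg
            have hxx : |x ω b ⬝ᵥ x ω c| ≤ 10 * ∑ s, z (ω s) ^ 2 := by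
              have hs : Real.sqrt (10 * ∑ s, z (ω s) ^ 2) ^ 2 = 10 * ∑ s, z (ω s) ^ 2 :=
                Real.sq_sqrt (by positivity)
              have h1 := abs_dot_le (x ω b) (x ω c) (Real.sqrt_nonneg (10 * ∑ s, z (ω s) ^ 2))
                (Real.sqrt_nonneg (10 * ∑ s, z (ω s) ^ 2))
                (hs.symm ▸ partial_solution_le a z ω hl _)
                (hs.symm ▸ partial_solution_le a z ω hl _)
              rwa [← sq, hs] at h1
            have hχ1 : |χ ω - (1 - badInd a ω (block m (e b c)))| ≤
                ∑ k, badInd a ω (block m k) := by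
              rw [badInd_of_good hg, sub_zero]
              exact abs_prod_one_sub_sub_one_le (fun k => badInd_nonneg a ω (block m k))
                fun k => badInd_le_one a ω (block m k)
            rw [abs_mul]
            calc _ ≤ (∑ k, badInd a ω (block m k)) * (10 * ∑ s, z (ω s) ^ 2) :=
                  mul_le_mul hχ1 hxx (abs_nonneg _)
                    (Finset.sum_nonneg fun k _ => badInd_nonneg a ω _)
              _ = _ := by ring
          · have hχ0 : χ ω = 0 := Finset.prod_eq_zero (Finset.mem_univ (e b c)) (by
              rw [badInd_of_bad hg, sub_self])
            rw [hχ0, badInd_of_bad hg, sub_self, sub_self, zero_mul, abs_zero]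
            have := Finset.sum_nonneg fun k (_ : k ∈ (univ : Finset (Fin 3))) =>
              badInd_nonneg a ω (block m k)
            positivity
      _ ≤ 10 * ∑ _k : Fin 3, 2 * ρ * P := by
          rw [expec_const_mul, expec_sum]
          exact mul_le_mul_of_nonneg_left
            (Finset.sum_le_sum fun k _ => M.energy_bad (hPb k)) (by norm_num)
      _ = _ := by
          rw [Finset.sum_const, Finset.card_univ, Fintype.card_fin, nsmul_eq_mul]; push_cast; ring
  -- the sum over pairs of draws
  have hterms : ∀ b c : Fin 3,
      expec π (fun ω => (1 - badInd a ω (block m (e b c))) * (x ω b ⬝ᵥ x ω c)) =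
      ∑ s ∈ block m b, ∑ t ∈ block m c, expec π (fun ω =>
        (1 - badInd a ω (block m (e (colour s) (colour t)))) * pairTerm a z ω s t) := by
    intro b c
    simp only [hpair, Finset.mul_sum]
    rw [expec_sum]
    refine Finset.sum_congr rfl fun s hs => ?_
    rw [expec_sum]
    refine Finset.sum_congr rfl fun t ht => ?_
    rw [mem_block.1 hs, mem_block.1 ht]
  set E : Fin m → Fin m → ℝ := fun s t => expec π (fun ω =>
        (1 - badInd a ω (block m (e (colour s) (colour t)))) * pairTerm a z ω s t) with hE
  have htotal : ∑ b : Fin 3, ∑ c : Fin 3,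
      expec π (fun ω => (1 - badInd a ω (block m (e b c))) * (x ω b ⬝ᵥ x ω c)) =
      ∑ s, ∑ t, E s t := by
    simp only [hterms]
    rw [← Finset.sum_fiberwise univ colour (fun s => ∑ t, E s t)]
    refine Finset.sum_congr rfl fun b _ => ?_
    rw [Finset.sum_comm]
    refine Finset.sum_congr rfl fun s _ => ?_
    exact Finset.sum_fiberwise univ colour (E s)
  have hI1 : ∀ s t : Fin m, s ∉ block m (e (colour s) (colour t)) := fun s t h =>
    he1 _ _ (mem_block.1 h)
  have hI2 : ∀ s t : Fin m, t ∉ block m (e (colour s) (colour t)) := fun s t h =>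
    he2 _ _ (mem_block.1 h)
  have hsumE : |∑ s, ∑ t, E s t - m * ∑ i, π i * z i ^ 2 * (a i ⬝ᵥ a i)| ≤
      2 * ρ * (7000 * (ε * Real.sqrt ε) + P * ε) + 300000 * ε ^ 2 * ρ := by
    have hsplit : ∑ s, ∑ t, E s t - m * ∑ i, π i * z i ^ 2 * (a i ⬝ᵥ a i) =
        ∑ s, ((E s s - ∑ i, π i * z i ^ 2 * (a i ⬝ᵥ a i)) + ∑ t ∈ univ.erase s, E s t) := by
      rw [Finset.sum_add_distrib, Finset.sum_sub_distrib, Finset.sum_const, Finset.card_univ,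
        Fintype.card_fin, nsmul_eq_mul]
      have : ∑ s, ∑ t, E s t = ∑ s, E s s + ∑ s, ∑ t ∈ univ.erase s, E s t := by
        rw [← Finset.sum_add_distrib]
        exact Finset.sum_congr rfl fun s _ => (Finset.add_sum_erase _ _ (Finset.mem_univ s)).symm
      rw [this]; ring
    rw [hsplit]
    calc _ ≤ ∑ _s : Fin m, ((∑ i, π i * z i ^ 2) * (7000 * (ε * Real.sqrt ε) + P * ε) +
          300000 * ε ^ 2 * ρ / m) := by
          refine (Finset.abs_sum_le_sum_abs _ _).trans (Finset.sum_le_sum fun s _ => ?_)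
          refine (abs_add_le _ _).trans (add_le_add (M.diag_term (hI1 s s) (hPb' _)) ?_)
          calc _ ≤ ∑ _t ∈ univ.erase s, 300000 * ε ^ 2 * ρ / m ^ 2 :=
                (Finset.abs_sum_le_sum_abs _ _).trans (Finset.sum_le_sum fun t ht =>
                  M.offdiag_term (Finset.ne_of_mem_erase ht).symm (hI1 s t) (hI2 s t))
            _ ≤ ∑ _t : Fin m, 300000 * ε ^ 2 * ρ / m ^ 2 :=
                Finset.sum_le_sum_of_subset_of_nonneg (Finset.subset_univ _)
                  fun _ _ _ => by positivity
            _ = _ := by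
                rw [Finset.sum_const, Finset.card_univ, Fintype.card_fin, nsmul_eq_mul]
                field_simp
      _ = (m * ∑ i, π i * z i ^ 2) * (7000 * (ε * Real.sqrt ε) + P * ε) +
          300000 * ε ^ 2 * ρ := by
          rw [Finset.sum_const, Finset.card_univ, Fintype.card_fin, nsmul_eq_mul]
          field_simp
      _ ≤ _ := by
          have := mul_le_mul_of_nonneg_right M.resp
            (by positivity : 0 ≤ 7000 * (ε * Real.sqrt ε) + P * ε)
          linarith
  have hexp : expec π (fun ω => χ ω * (((gramOn a ω univ)⁻¹ *ᵥ ∑ s, z (ω s) • a (ω s)) ⬝ᵥ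
      ((gramOn a ω univ)⁻¹ *ᵥ ∑ s, z (ω s) • a (ω s)))) =
      ∑ b : Fin 3, ∑ c : Fin 3, expec π (fun ω => χ ω * (x ω b ⬝ᵥ x ω c)) := by
    simp only [hsumx, ← expec_sum]
    congr 1; funext ω
    simp only [← Finset.mul_sum]
    rw [sum_dotProduct]
    congr 1
    refine Finset.sum_congr rfl fun b _ => ?_
    rw [dotProduct_sum]
  rw [hexp]
  have hdiff : |∑ b : Fin 3, ∑ c : Fin 3, expec π (fun ω => χ ω * (x ω b ⬝ᵥ x ω c)) -
      ∑ s, ∑ t, E s t| ≤ 540 * ρ * P := by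
    rw [← htotal, ← Finset.sum_sub_distrib]
    simp only [← Finset.sum_sub_distrib]
    calc _ ≤ ∑ _b : Fin 3, ∑ _c : Fin 3, 60 * ρ * P :=
          (Finset.abs_sum_le_sum_abs _ _).trans (Finset.sum_le_sum fun b _ =>
            (Finset.abs_sum_le_sum_abs _ _).trans (Finset.sum_le_sum fun c _ => hrep b c))
      _ = _ := by
          simp only [Finset.sum_const, Finset.card_univ, Fintype.card_fin, nsmul_eq_mul]
          push_cast; ring
  have hr2 : Real.sqrt ε * Real.sqrt ε = ε := Real.mul_self_sqrt hε.le
  have hr1 : Real.sqrt ε ≤ 1 := Real.sqrt_le_one.2 (by linarith)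
  have hr0 := Real.sqrt_nonneg ε
  have h2 : ε ^ 2 ≤ ε * Real.sqrt ε := by nlinarith
  have h3 : ε ^ 2 * ρ ≤ ε * Real.sqrt ε * ρ := mul_le_mul_of_nonneg_right h2 hρ
  have h4 : P * ε * ρ ≤ P * ρ := by
    have := mul_nonneg hP0 hρ
    nlinarith
  have h5 : 0 ≤ P * ρ := mul_nonneg hP0 hρ
  have h6 : 0 ≤ ε * Real.sqrt ε * ρ := by positivity
  calc _ ≤ _ := abs_sub_le _ (∑ s, ∑ t, E s t) _
    _ ≤ 540 * ρ * P + (2 * ρ * (7000 * (ε * Real.sqrt ε) + P * ε) + 300000 * ε ^ 2 * ρ) :=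
        add_le_add hdiff hsumE
    _ ≤ _ := by nlinarith

end blocks

/-! ### Whitening the design -/

/-- Whitening of a design matrix of full column rank. -/
lemma exists_whitening {n p : ℕ} {X : Matrix (Fin n) (Fin p) ℝ} (hdet : IsUnit (Xᵀ * X).det) :
    ∃ W : Matrix (Fin p) (Fin p) ℝ, Wᵀ * (Xᵀ * X) * W = 1 := by
  have hsym : (Xᵀ * X)ᵀ = Xᵀ * X := by rw [transpose_mul, transpose_transpose]
  obtain ⟨V, d, hV, hV', hB⟩ := exists_diagonalization hsym
  have hdiag : diagonal d = Vᵀ * (Xᵀ * X) * V := by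
    rw [hB]
    calc diagonal d = (Vᵀ * V) * diagonal d * (Vᵀ * V) := by rw [hV, one_mul, mul_one]
      _ = _ := by simp only [Matrix.mul_assoc]
  have hd0 : ∀ l, 0 ≤ d l := by
    intro l
    have h1 : d l = ((X * V)ᵀ * (X * V)) l l := by
      have h2 := congrFun (congrFun hdiag l) l
      rw [diagonal_apply_eq] at h2
      rw [h2, transpose_mul]
      simp only [Matrix.mul_assoc]
    rw [h1, mul_apply]
    exact Finset.sum_nonneg fun i _ => by rw [transpose_apply]; exact mul_self_nonneg _
  have hdne : ∀ l, d l ≠ 0 := by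
    have h1 : IsUnit (diagonal d).det := by
      rw [hdiag, det_mul, det_mul]
      have h2 : V.det * Vᵀ.det = 1 := by rw [← det_mul, hV', det_one]
      have h3 : Vᵀ.det * V.det = 1 := by rw [mul_comm]; exact h2
      exact ((IsUnit.of_mul_eq_one _ h3).mul hdet).mul (IsUnit.of_mul_eq_one _ h2)
    rw [det_diagonal, isUnit_iff_ne_zero, Finset.prod_ne_zero_iff] at h1
    exact fun l => h1 l (Finset.mem_univ l)
  refine ⟨V * diagonal fun l => (Real.sqrt (d l))⁻¹, ?_⟩
  rw [transpose_mul, diagonal_transpose]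
  calc _ = diagonal (fun l => (Real.sqrt (d l))⁻¹) * (Vᵀ * (Xᵀ * X) * V) *
        diagonal (fun l => (Real.sqrt (d l))⁻¹) := by simp only [Matrix.mul_assoc]
    _ = 1 := by
        rw [← hdiag, diagonal_mul_diagonal, diagonal_mul_diagonal, ← diagonal_one]
        congr 1; funext l
        have h1 : Real.sqrt (d l) * Real.sqrt (d l) = d l := Real.mul_self_sqrt (hd0 l)
        have h2 : Real.sqrt (d l) ≠ 0 := fun h => hdne l (by rw [← h1, h, mul_zero])
        nth_rewrite 2 [← h1]
        field_simp

section reduction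
variable {n p m : ℕ} {X : Matrix (Fin n) (Fin p) ℝ} {W : Matrix (Fin p) (Fin p) ℝ}

/-- Rows of the whitened design. -/
def wrow (X : Matrix (Fin n) (Fin p) ℝ) (W : Matrix (Fin p) (Fin p) ℝ) (i : Fin n) : Fin p → ℝ :=
  Wᵀ *ᵥ X i

/-- Square root of the debiased importance weight `1 / (m π_i - ℓ_i)`. -/
def dwt (m : ℕ) (X : Matrix (Fin n) (Fin p) ℝ) (π : Fin n → ℝ) (i : Fin n) : ℝ :=
  Real.sqrt (m * π i - lev X i)⁻¹

lemma inv_gram_of_whitening (hW : Wᵀ * (Xᵀ * X) * W = 1) : (Xᵀ * X)⁻¹ = W * Wᵀ := by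
  rw [Matrix.mul_assoc, mul_eq_one_comm] at hW
  exact inv_eq_right_inv (by rw [← Matrix.mul_assoc]; exact hW)

lemma lev_eq_of_whitening (hW : Wᵀ * (Xᵀ * X) * W = 1) (i : Fin n) :
    lev X i = wrow X W i ⬝ᵥ wrow X W i := by
  unfold lev wrow
  rw [inv_gram_of_whitening hW, dot_mul_mulVec, transpose_transpose, mulVec_mulVec]

lemma lev_nonneg_of_whitening (hW : Wᵀ * (Xᵀ * X) * W = 1) (i : Fin n) : 0 ≤ lev X i := by
  rw [lev_eq_of_whitening hW]; exact dot_self_nonneg _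

lemma wrow_dot (x : Fin p → ℝ) (i : Fin n) : wrow X W i ⬝ᵥ x = ((X * W) *ᵥ x) i := by
  unfold wrow
  rw [dot_mul_mulVec, transpose_transpose, ← mulVec_mulVec]
  rfl

lemma sum_smul_wrow (c : Fin n → ℝ) : ∑ i, c i • wrow X W i = (X * W)ᵀ *ᵥ c := by
  have h1 : ∑ i, c i • X i = Xᵀ *ᵥ c := by
    ext k
    simp [mulVec, dotProduct, mul_comm]
  rw [transpose_mul, ← mulVec_mulVec, ← h1]
  exact (mulVec_sum_smul Wᵀ c fun i => X i).symm

lemma norm_whitened (hW : Wᵀ * (Xᵀ * X) * W = 1) (x : Fin p → ℝ) :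
    ((X * W) *ᵥ x) ⬝ᵥ ((X * W) *ᵥ x) = x ⬝ᵥ x := by
  rw [dot_mul_mulVec, mulVec_mulVec]
  have : (X * W)ᵀ * (X * W) = 1 := by
    rw [transpose_mul, ← hW]; simp only [Matrix.mul_assoc]
  rw [this, one_mulVec]

lemma sum_sq_wrow (hW : Wᵀ * (Xᵀ * X) * W = 1) (x : Fin p → ℝ) :
    ∑ i, (wrow X W i ⬝ᵥ x) ^ 2 = x ⬝ᵥ x := by
  rw [← norm_whitened hW x]
  simp only [wrow_dot]
  exact Finset.sum_congr rfl fun i _ => sq _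

lemma sum_wrow_smul_wrow (hW : Wᵀ * (Xᵀ * X) * W = 1) (x : Fin p → ℝ) :
    ∑ i, (wrow X W i ⬝ᵥ x) • wrow X W i = x := by
  rw [sum_smul_wrow]
  simp only [wrow_dot]
  change (X * W)ᵀ *ᵥ ((X * W) *ᵥ x) = x
  have : (X * W)ᵀ * (X * W) = 1 := by
    rw [transpose_mul, ← hW]; simp only [Matrix.mul_assoc]
  rw [mulVec_mulVec, this, one_mulVec]

lemma norm_sum_smul_wrow_le (hW : Wᵀ * (Xᵀ * X) * W = 1) (c : Fin n → ℝ) :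
    (∑ i, c i • wrow X W i) ⬝ᵥ (∑ i, c i • wrow X W i) ≤ ∑ i, c i ^ 2 := by
  rw [sum_smul_wrow]
  set x := (X * W)ᵀ *ᵥ c with hx
  have h1 : x ⬝ᵥ x = c ⬝ᵥ ((X * W) *ᵥ x) := by
    nth_rewrite 1 [hx]
    rw [dot_mul_mulVec, transpose_transpose]
  have h2 := dot_self_nonneg (c - (X * W) *ᵥ x)
  have h3 := norm_whitened hW x
  have h4 : ∑ i, c i ^ 2 = c ⬝ᵥ c := by simp only [dotProduct, sq]
  rw [h4]
  simp only [sub_dotProduct, dotProduct_sub] at h2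
  rw [dotProduct_comm ((X * W) *ᵥ x) c] at h2
  linarith

lemma sum_lev (hW : Wᵀ * (Xᵀ * X) * W = 1) : ∑ i, lev X i = p := by
  have h1 : ∀ i, lev X i = ∑ k, (wrow X W i ⬝ᵥ Pi.single k 1) ^ 2 := by
    intro i
    rw [lev_eq_of_whitening hW]
    simp only [dotProduct_single_one]
    exact Finset.sum_congr rfl fun k _ => (sq _).symm
  simp only [h1]
  rw [Finset.sum_comm]
  simp only [sum_sq_wrow hW]
  simp

lemma transpose_mulVec_olsResid (hdet : IsUnit (Xᵀ * X).det) (y : Fin n → ℝ) :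
    Xᵀ *ᵥ olsResid X y = 0 := by
  unfold olsResid olsSol
  rw [mulVec_sub, mulVec_mulVec _ Xᵀ X, mulVec_inv_cancel hdet, sub_self]

/-- The normal equations in whitened coordinates. -/
lemma sum_olsResid_smul_wrow (hdet : IsUnit (Xᵀ * X).det) (y : Fin n → ℝ) :
    ∑ i, olsResid X y i • wrow X W i = 0 := by
  rw [sum_smul_wrow, transpose_mul, ← mulVec_mulVec, transpose_mulVec_olsResid hdet, mulVec_zero]

lemma samplingSdeb_mulVec {π : Fin n → ℝ} (hπ : ∀ i, 0 < π i) (hm : 0 < m)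
    (hlev : ∀ i, lev X i < m * π i) (ω : Fin m → Fin n) (v : Fin n → ℝ) (s : Fin m) :
    (samplingSdeb X π ω *ᵥ v) s = dwt m X π (ω s) * v (ω s) := by
  have hm' : (0 : ℝ) < m := by exact_mod_cast hm
  have hmπ : 0 < m * π (ω s) := mul_pos hm' (hπ _)
  have h1 : (samplingSdeb X π ω *ᵥ v) s = 1 / Real.sqrt (1 - lev X (ω s) / (m * π (ω s))) *
      (1 / Real.sqrt (m * π (ω s)) * v (ω s)) := by
    unfold samplingSdeb
    rw [← mulVec_mulVec, mulVec_diagonal]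
    congr 1
    simp [samplingS, mulVec, dotProduct]
  have h2 : 0 ≤ 1 - lev X (ω s) / (m * π (ω s)) := by
    rw [sub_nonneg, div_le_one hmπ]; exact (hlev _).le
  have h3 : (1 - lev X (ω s) / (m * π (ω s))) * (m * π (ω s)) = m * π (ω s) - lev X (ω s) := by
    rw [sub_mul, div_mul_cancel₀ _ hmπ.ne', one_mul]
  rw [h1, ← mul_assoc, one_div_mul_one_div, ← Real.sqrt_mul h2, h3, one_div, dwt, Real.sqrt_inv]

/-- In whitened coordinates the sketched Gram matrix is the Gram matrix of the reweighted rows. -/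
lemma whitened_sketch_gram {π : Fin n → ℝ} (hπ : ∀ i, 0 < π i) (hm : 0 < m)
    (hlev : ∀ i, lev X i < m * π i) (ω : Fin m → Fin n) :
    Wᵀ * ((samplingSdeb X π ω * X)ᵀ * (samplingSdeb X π ω * X)) * W =
      gramOn (fun i => dwt m X π i • wrow X W i) ω univ := by
  have hrow : ∀ s k, (samplingSdeb X π ω * X * W) s k =
      (dwt m X π (ω s) • wrow X W (ω s)) k := by
    intro s k
    have h1 : (samplingSdeb X π ω * X * W) s k =
        (samplingSdeb X π ω *ᵥ fun j => (X * W) j k) s := by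
      rw [Matrix.mul_assoc]; rfl
    rw [h1, samplingSdeb_mulVec hπ hm hlev, Pi.smul_apply, smul_eq_mul]
    congr 1
    simp [wrow, mulVec, dotProduct, mul_apply, mul_comm]
  have h2 : Wᵀ * ((samplingSdeb X π ω * X)ᵀ * (samplingSdeb X π ω * X)) * W =
      (samplingSdeb X π ω * X * W)ᵀ * (samplingSdeb X π ω * X * W) := by
    simp only [transpose_mul, Matrix.mul_assoc]
  rw [h2]
  ext k l
  rw [mul_apply, gramOn, Matrix.sum_apply]
  refine Finset.sum_congr rfl fun s _ => ?_
  rw [transpose_apply, hrow, hrow, vecMulVec_apply]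

lemma whitened_sketch_rhs {π : Fin n → ℝ} (hπ : ∀ i, 0 < π i) (hm : 0 < m)
    (hlev : ∀ i, lev X i < m * π i) (ω : Fin m → Fin n) (v : Fin n → ℝ) :
    Wᵀ *ᵥ ((samplingSdeb X π ω * X)ᵀ *ᵥ (samplingSdeb X π ω *ᵥ v)) =
      ∑ s, (dwt m X π (ω s) * v (ω s)) • (dwt m X π (ω s) • wrow X W (ω s)) := by
  have h1 : (samplingSdeb X π ω * X)ᵀ *ᵥ (samplingSdeb X π ω *ᵥ v) =
      ∑ s, (dwt m X π (ω s) * v (ω s)) • (dwt m X π (ω s) • X (ω s)) := by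
    ext k
    have h0 : ((samplingSdeb X π ω * X)ᵀ *ᵥ (samplingSdeb X π ω *ᵥ v)) k =
        ∑ s, (samplingSdeb X π ω * X) s k * (samplingSdeb X π ω *ᵥ v) s := rfl
    rw [h0, Finset.sum_apply]
    refine Finset.sum_congr rfl fun s _ => ?_
    rw [samplingSdeb_mulVec hπ hm hlev]
    have h2 : (samplingSdeb X π ω * X) s k = (samplingSdeb X π ω *ᵥ fun j => X j k) s := rfl
    rw [h2, samplingSdeb_mulVec hπ hm hlev]
    simp only [Pi.smul_apply, smul_eq_mul]
    ring
  rw [h1, mulVec_sum_smul]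
  refine Finset.sum_congr rfl fun s _ => ?_
  rw [mulVec_smul]; rfl

/-- Excess loss of the debiased subsampled estimator in whitened coordinates. -/
lemma loss_betaCheck {π : Fin n → ℝ} (hdet : IsUnit (Xᵀ * X).det)
    (hW : Wᵀ * (Xᵀ * X) * W = 1) (hπ : ∀ i, 0 < π i) (hm : 0 < m)
    (hlev : ∀ i, lev X i < m * π i) (y : Fin n → ℝ) (ω : Fin m → Fin n)
    (hl : LowerBdd (1 / 10) (gramOn (fun i => dwt m X π i • wrow X W i) ω univ)) :
    IsUnit ((samplingSdeb X π ω * X)ᵀ * (samplingSdeb X π ω * X)).det ∧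
    lossL X y (betaCheck X y π ω) = lossL X y (olsSol X y) +
      ((gramOn (fun i => dwt m X π i • wrow X W i) ω univ)⁻¹ *ᵥ
        ∑ s, (dwt m X π (ω s) * olsResid X y (ω s)) • (dwt m X π (ω s) • wrow X W (ω s))) ⬝ᵥ
      ((gramOn (fun i => dwt m X π i • wrow X W i) ω univ)⁻¹ *ᵥ
        ∑ s, (dwt m X π (ω s) * olsResid X y (ω s)) • (dwt m X π (ω s) • wrow X W (ω s))) := by
  have hG := whitened_sketch_gram (W := W) hπ hm hlev ω
  have hg := whitened_sketch_rhs (W := W) hπ hm hlev ω (olsResid X y)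
  rw [← hG] at hl
  rw [← hG, ← hg]
  set S := samplingSdeb X π ω with hS
  set K := (S * X)ᵀ * (S * X) with hK
  have hunit := hl.isUnit_det (by norm_num)
  have hKdet : IsUnit K.det := by
    rw [det_mul, det_mul] at hunit
    exact isUnit_of_mul_isUnit_right (isUnit_of_mul_isUnit_left hunit)
  refine ⟨hKdet, ?_⟩
  set v := (Wᵀ * K * W)⁻¹ *ᵥ (Wᵀ *ᵥ ((S * X)ᵀ *ᵥ (S *ᵥ olsResid X y))) with hv
  have hWt : IsUnit (Wᵀ).det := by
    rw [det_mul, det_mul] at hunit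
    exact isUnit_of_mul_isUnit_left (isUnit_of_mul_isUnit_left hunit)
  have hv1 : K *ᵥ (W *ᵥ v) = (S * X)ᵀ *ᵥ (S *ᵥ olsResid X y) := by
    have h1 : (Wᵀ * K * W) *ᵥ v = Wᵀ *ᵥ ((S * X)ᵀ *ᵥ (S *ᵥ olsResid X y)) :=
      mulVec_inv_cancel hunit _
    have h2 : Wᵀ *ᵥ (K *ᵥ (W *ᵥ v)) = Wᵀ *ᵥ ((S * X)ᵀ *ᵥ (S *ᵥ olsResid X y)) := by
      rw [← h1, mulVec_mulVec, mulVec_mulVec]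
    have h3 := congrArg (fun x => (Wᵀ)⁻¹ *ᵥ x) h2
    simpa only [mulVec_mulVec, ← Matrix.mul_assoc, nonsing_inv_mul _ hWt, Matrix.one_mul,
      one_mulVec] using h3
  have hβ : betaCheck X y π ω = olsSol X y + W *ᵥ v := by
    unfold betaCheck
    apply inv_mulVec_eq hKdet
    rw [mulVec_add, hv1]
    have h1 : y = X *ᵥ olsSol X y + olsResid X y := by unfold olsResid; abel
    conv_rhs => rw [h1]
    rw [mulVec_add, mulVec_add, ← hS, hK]
    congr 1
    simp only [mulVec_mulVec]
  have hperp : olsResid X y ⬝ᵥ ((X * W) *ᵥ v) = 0 := by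
    rw [← mulVec_mulVec, dotProduct_comm, dot_mul_mulVec, transpose_mulVec_olsResid hdet,
      dotProduct_zero]
  have hres : y - X *ᵥ betaCheck X y π ω = olsResid X y - (X * W) *ᵥ v := by
    rw [hβ, mulVec_add, mulVec_mulVec]; unfold olsResid; abel
  have hnorm := norm_whitened hW v
  unfold lossL
  rw [hres]
  change _ = olsResid X y ⬝ᵥ olsResid X y + v ⬝ᵥ v
  simp only [sub_dotProduct, dotProduct_sub]
  rw [dotProduct_comm ((X * W) *ᵥ v) (olsResid X y), hperp, hnorm]
  ring

end reduction

/-! ### The design as a whitened model -/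

section model
variable {n p m : ℕ} {X : Matrix (Fin n) (Fin p) ℝ} {W : Matrix (Fin p) (Fin p) ℝ}
  {π : Fin n → ℝ} {η : ℝ}

lemma dwt_sq (hlev : ∀ i, lev X i < m * π i) (i : Fin n) :
    dwt m X π i ^ 2 = (m * π i - lev X i)⁻¹ :=
  Real.sq_sqrt (inv_nonneg.2 (sub_nonneg.2 (hlev i).le))

/-- The debiasing factors `m π_i / (m π_i - ℓ_i)` are close to one. -/
lemma debias_factor_bounds (hlev0 : ∀ i, 0 ≤ lev X i) (hlev : ∀ i, lev X i < m * π i)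
    (hη : η ≤ 1 / 2000) (hlevη : ∀ i, lev X i ≤ η * (m * π i)) (i : Fin n) :
    1 ≤ m * π i * dwt m X π i ^ 2 ∧ m * π i * dwt m X π i ^ 2 ≤ 1 + 2 * η := by
  have h1 : 0 < m * π i - lev X i := sub_pos.2 (hlev i)
  have h2 := hlev0 i
  have h3 := hlevη i
  have h5 : 0 < m * π i := by linarith
  rw [dwt_sq hlev, ← div_eq_mul_inv, le_div_iff₀ h1, div_le_iff₀ h1]
  have h4 : 0 ≤ η := by
    by_contra h; push Not at h; nlinarith
  constructor
  · linarith
  · nlinarith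

/-- The debiased rows `d_i u_i` and residuals `d_i r_i` of a design satisfy the whitened model with
`ε = 2 η`. -/
lemma whitenedModel_of_design (hdet : IsUnit (Xᵀ * X).det) (hW : Wᵀ * (Xᵀ * X) * W = 1)
    (hπ : ∀ i, 0 < π i) (hsum : ∑ i, π i = 1) (hm : 0 < m) (hlev : ∀ i, lev X i < m * π i)
    (hη0 : 0 < η) (hη : η ≤ 1 / 2000) (hlevη : ∀ i, lev X i ≤ η * (m * π i))
    (hmη : 1 / (m : ℝ) ≤ η) (y : Fin n → ℝ) :
    WhitenedModel m π (fun i => dwt m X π i • wrow X W i)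
      (fun i => dwt m X π i * olsResid X y i) (2 * η) (olsResid X y ⬝ᵥ olsResid X y) := by
  have hκ := debias_factor_bounds (lev_nonneg_of_whitening hW) hlev hη hlevη
  have hm' : (0 : ℝ) < m := by exact_mod_cast hm
  set d := dwt m X π with hd
  set u := wrow X W with hu
  set r := olsResid X y with hr
  have hquad : ∀ x : Fin p → ℝ, m * ∑ i, π i * ((d i • u i) ⬝ᵥ x) ^ 2 =
      ∑ i, (m * π i * d i ^ 2) * (u i ⬝ᵥ x) ^ 2 := by
    intro x
    rw [Finset.mul_sum]
    refine Finset.sum_congr rfl fun i _ => ?_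
    rw [smul_dotProduct, smul_eq_mul]; ring
  refine ⟨hπ, hsum, hm, by linarith, by linarith, by linarith, dot_self_nonneg _, ?_, ?_, ?_, ?_,
    ?_, ?_⟩
  · intro i
    rw [smul_dotProduct, dotProduct_smul, smul_eq_mul, smul_eq_mul,
      ← lev_eq_of_whitening hW]
    have h1 := (hκ i).2
    have h2 := hlevη i
    have h3 := sq_nonneg (d i)
    calc d i * (d i * lev X i) = d i ^ 2 * lev X i := by ring
      _ ≤ d i ^ 2 * (η * (m * π i)) := mul_le_mul_of_nonneg_left h2 h3
      _ = η * (m * π i * d i ^ 2) := by ring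
      _ ≤ η * (1 + 2 * η) := mul_le_mul_of_nonneg_left h1 hη0.le
      _ ≤ 2 * η := by nlinarith
  · intro x
    rw [hquad, ← sum_sq_wrow hW x]
    exact Finset.sum_le_sum fun i _ => le_mul_of_one_le_left (sq_nonneg _) (hκ i).1
  · intro x
    rw [hquad, ← sum_sq_wrow hW x, Finset.mul_sum]
    exact Finset.sum_le_sum fun i _ => mul_le_mul_of_nonneg_right (hκ i).2 (sq_nonneg _)
  · intro x
    have e : ∑ i, (m * π i * ((d i • u i) ⬝ᵥ x)) • d i • u i - x =
        ∑ i, ((m * π i * d i ^ 2 - 1) * (u i ⬝ᵥ x)) • u i := by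
      nth_rewrite 2 [← sum_wrow_smul_wrow hW x]
      rw [← Finset.sum_sub_distrib]
      refine Finset.sum_congr rfl fun i _ => ?_
      rw [smul_dotProduct, smul_eq_mul, smul_smul, ← sub_smul]
      congr 1; ring
    rw [e]
    refine (norm_sum_smul_wrow_le hW _).trans ?_
    rw [← sum_sq_wrow hW x, Finset.mul_sum]
    refine Finset.sum_le_sum fun i _ => ?_
    rw [mul_pow]
    refine mul_le_mul_of_nonneg_right ?_ (sq_nonneg _)
    have h1 := hκ i
    exact pow_le_pow_left₀ (by linarith) (by linarith) 2
  · have e : m * ∑ i, π i * (d i * r i) ^ 2 = ∑ i, (m * π i * d i ^ 2) * r i ^ 2 := by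
      rw [Finset.mul_sum]
      exact Finset.sum_congr rfl fun i _ => by ring
    rw [e, dotProduct, Finset.mul_sum]
    refine Finset.sum_le_sum fun i _ => ?_
    rw [← sq]
    have h1 := (hκ i).2
    exact mul_le_mul_of_nonneg_right (by linarith) (sq_nonneg _)
  · intro c t B hB
    -- subtracting `t ∑ r_i u_i = 0` leaves only the deviations of the weights from `t`
    have e : ∑ i, (m * π i * (d i * r i) * c i) • d i • u i =
        ∑ i, ((m * π i * d i ^ 2 * c i - t) * r i) • u i := by
      have h0 : t • ∑ i, r i • u i = 0 := by
        rw [sum_olsResid_smul_wrow hdet, smul_zero]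
      rw [← sub_zero (∑ i, (m * π i * (d i * r i) * c i) • d i • u i), ← h0, Finset.smul_sum,
        ← Finset.sum_sub_distrib]
      refine Finset.sum_congr rfl fun i _ => ?_
      rw [smul_smul, smul_smul, ← sub_smul]
      congr 1; ring
    rw [e]
    refine (norm_sum_smul_wrow_le hW _).trans ?_
    rw [dotProduct, Finset.mul_sum]
    refine Finset.sum_le_sum fun i _ => ?_
    rw [mul_pow, ← sq (r i)]
    refine mul_le_mul_of_nonneg_right ?_ (sq_nonneg _)
    obtain ⟨h1, h2⟩ := hκ i
    have hBi := hB i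
    have hB0 : 0 ≤ B := (abs_nonneg _).trans hBi
    have h3 : |m * π i * d i ^ 2 * c i - t| ≤ 2 * B + |t| * (2 * η) := by
      have e3 : m * π i * d i ^ 2 * c i - t =
          m * π i * d i ^ 2 * (c i - t) + t * (m * π i * d i ^ 2 - 1) := by ring
      rw [e3]
      refine (abs_add_le _ _).trans (add_le_add ?_ ?_)
      · rw [abs_mul, abs_of_nonneg (by linarith)]
        exact mul_le_mul (by linarith) hBi (abs_nonneg _) (by norm_num)
      · rw [abs_mul, abs_of_nonneg (by linarith : 0 ≤ m * π i * d i ^ 2 - 1)]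
        exact mul_le_mul_of_nonneg_left (by linarith) (abs_nonneg _)
    exact sq_le_sq' (by linarith [abs_le.1 h3]) (abs_le.1 h3).2

lemma deltaOLS_eq (y : Fin n → ℝ) :
    deltaOLS X y π m = ∑ i, lev X i / (m * π i) * olsResid X y i ^ 2 := by
  unfold deltaOLS
  rw [dotProduct]
  refine Finset.sum_congr rfl fun i _ => ?_
  rw [mulVec_diagonal]; ring

lemma deltaOLS_bounds (hlev0 : ∀ i, 0 ≤ lev X i) (hlev : ∀ i, lev X i < m * π i)
    (hlevη : ∀ i, lev X i ≤ η * (m * π i)) (y : Fin n → ℝ) :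
    0 ≤ deltaOLS X y π m ∧ deltaOLS X y π m ≤ η * (olsResid X y ⬝ᵥ olsResid X y) := by
  have hmπ : ∀ i, 0 < m * π i := fun i => (hlev0 i).trans_lt (hlev i)
  rw [deltaOLS_eq]
  constructor
  · exact Finset.sum_nonneg fun i _ =>
      mul_nonneg (div_nonneg (hlev0 i) (hmπ i).le) (sq_nonneg _)
  · rw [dotProduct, Finset.mul_sum]
    refine Finset.sum_le_sum fun i _ => ?_
    rw [← sq]
    refine mul_le_mul_of_nonneg_right ?_ (sq_nonneg _)
    rw [div_le_iff₀ (hmπ i)]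
    exact hlevη i

/-- The limiting mean of the whitened model agrees with `Δ(X)` up to second order. -/
lemma main_term_sub_deltaOLS (hW : Wᵀ * (Xᵀ * X) * W = 1) (hlev : ∀ i, lev X i < m * π i)
    (hη0 : 0 < η) (hη : η ≤ 1 / 2000) (hlevη : ∀ i, lev X i ≤ η * (m * π i)) (y : Fin n → ℝ) :
    |m * ∑ i, π i * (dwt m X π i * olsResid X y i) ^ 2 *
        ((dwt m X π i • wrow X W i) ⬝ᵥ (dwt m X π i • wrow X W i)) - deltaOLS X y π m| ≤
      5 * η ^ 2 * (olsResid X y ⬝ᵥ olsResid X y) := by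
  have hlev0 := lev_nonneg_of_whitening hW
  have hκ := debias_factor_bounds hlev0 hlev hη hlevη
  have hmπ : ∀ i, 0 < m * π i := fun i => (hlev0 i).trans_lt (hlev i)
  have e : m * ∑ i, π i * (dwt m X π i * olsResid X y i) ^ 2 *
        ((dwt m X π i • wrow X W i) ⬝ᵥ (dwt m X π i • wrow X W i)) - deltaOLS X y π m =
      ∑ i, (((m * π i * dwt m X π i ^ 2) ^ 2 - 1) * (lev X i / (m * π i))) *
        olsResid X y i ^ 2 := by
    rw [deltaOLS_eq, Finset.mul_sum, ← Finset.sum_sub_distrib]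
    refine Finset.sum_congr rfl fun i _ => ?_
    rw [smul_dotProduct, dotProduct_smul, smul_eq_mul, smul_eq_mul, ← lev_eq_of_whitening hW]
    have h1 := (hmπ i).ne'
    have h2 : (m : ℝ) ≠ 0 := left_ne_zero_of_mul h1
    have h3 : π i ≠ 0 := right_ne_zero_of_mul h1
    field_simp
  rw [e, dotProduct, Finset.mul_sum]
  refine (Finset.abs_sum_le_sum_abs _ _).trans (Finset.sum_le_sum fun i _ => ?_)
  rw [abs_mul, abs_of_nonneg (sq_nonneg (olsResid X y i)), ← sq]
  refine mul_le_mul_of_nonneg_right ?_ (sq_nonneg _)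
  obtain ⟨h1, h2⟩ := hκ i
  have h3 : 0 ≤ lev X i / (m * π i) := div_nonneg (hlev0 i) (hmπ i).le
  have h4 : lev X i / (m * π i) ≤ η := by rw [div_le_iff₀ (hmπ i)]; exact hlevη i
  have h5 : 0 ≤ (m * π i * dwt m X π i ^ 2) ^ 2 - 1 := by nlinarith
  have h6 : (m * π i * dwt m X π i ^ 2) ^ 2 - 1 ≤ 5 * η := by nlinarith
  rw [abs_of_nonneg (mul_nonneg h5 h3)]
  calc _ ≤ 5 * η * η := mul_le_mul h6 h4 h3 (by positivity)
    _ = _ := by ring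

end model

section final

open Classical in
/-- The event that all three blocks of draws have well-conditioned Gram matrices. -/
def goodEvent {n p m : ℕ} (a : Fin n → Fin p → ℝ) : Finset (Fin m → Fin n) :=
  univ.filter fun ω => ∀ b, LowerBdd (1 / 10) (gramOn a ω (block m b))

lemma mem_goodEvent {n p m : ℕ} {a : Fin n → Fin p → ℝ} {ω : Fin m → Fin n} :
    ω ∈ goodEvent a ↔ ∀ b, LowerBdd (1 / 10) (gramOn a ω (block m b)) := by
  simp [goodEvent]

lemma sum_goodEvent {n p m : ℕ} (π : Fin n → ℝ) (a : Fin n → Fin p → ℝ)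
    (F : (Fin m → Fin n) → ℝ) :
    ∑ ω ∈ goodEvent a, samplingP π ω * F ω =
      expec π (fun ω => (∏ b : Fin 3, (1 - badInd a ω (block m b))) * F ω) := by
  classical
  unfold expec
  rw [← Finset.sum_subset (Finset.subset_univ (goodEvent a))]
  · refine Finset.sum_congr rfl fun ω hω => ?_
    beta_reduce
    rw [Finset.prod_eq_one fun b _ => by rw [badInd_of_good (mem_goodEvent.1 hω b), sub_zero],
      one_mul]
  · intro ω _ hω
    rw [mem_goodEvent] at hω
    push Not at hω
    obtain ⟨b, hb⟩ := hω
    beta_reduce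
    rw [Finset.prod_eq_zero (Finset.mem_univ b) (by rw [badInd_of_bad hb, sub_self]), zero_mul,
      mul_zero]

lemma eventProb_goodEvent_ge {n p m : ℕ} {π : Fin n → ℝ} {a : Fin n → Fin p → ℝ} {P : ℝ}
    (hπ : ∀ i, 0 < π i) (hsum : ∑ i, π i = 1)
    (hP : ∀ b, expec π (fun ω : Fin m → Fin n => badInd a ω (block m b)) ≤ P) :
    1 - 3 * P ≤ eventProb (samplingP π) (goodEvent a : Finset (Fin m → Fin n)) := by
  have h1 : eventProb (samplingP π) (goodEvent a : Finset (Fin m → Fin n)) =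
      expec π (fun ω => ∏ b : Fin 3, (1 - badInd a ω (block m b))) := by
    have := sum_goodEvent (m := m) π a (fun _ => 1)
    unfold eventProb
    simpa only [mul_one] using this
  have h2 : expec π (fun ω : Fin m → Fin n => 1 - ∑ b : Fin 3, badInd a ω (block m b)) ≤
      expec π (fun ω => ∏ b : Fin 3, (1 - badInd a ω (block m b))) := by
    refine expec_mono hπ fun ω => ?_
    have := (abs_le.1 (abs_prod_one_sub_sub_one_le (fun b => badInd_nonneg a ω (block m b))
      fun b => badInd_le_one a ω (block m b))).1
    linarith
  rw [h1]
  refine le_trans ?_ h2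
  rw [expec_sub, expec_const hsum, expec_sum, Fin.sum_univ_three]
  linarith [hP 0, hP 1, hP 2]

end final

/-! ### Error bookkeeping and conclusion -/

section constants

/-- The failure probability of the Gram lower bound, `2 p exp(-1/(320 η))`, is negligible against
both `δ` and `η ^ 2`. -/
lemma failure_bounds {η δ : ℝ} {p : ℕ} (hη : 0 < η) (hp : 1 ≤ p) (hδ0 : 0 < δ)
    (hδ : δ ≤ 1 / 27) (hL : 1920 * η * Real.log (p / δ) ≤ 1) :
    3 * (2 * p * Real.exp (-(1 / (320 * η)))) ≤ δ ∧
      2 * p * Real.exp (-(1 / (320 * η))) ≤ 819200 * η ^ 2 := by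
  have hp1 : (1 : ℝ) ≤ p := by exact_mod_cast hp
  have hp0 : (0 : ℝ) < p := by linarith
  set x := 1 / (640 * η) with hx
  have hx0 : 0 < x := by positivity
  have hxL : 3 * Real.log (p / δ) ≤ x := by
    rw [hx, le_div_iff₀ (by positivity)]; linarith
  set e := Real.exp (-x) with he
  have he0 : 0 < e := Real.exp_pos _
  have he1 : e ≤ 1 := Real.exp_le_one_iff.2 (by linarith)
  have hsplit : Real.exp (-(1 / (320 * η))) = e * e := by
    rw [he, ← Real.exp_add]; congr 1; rw [hx]; field_simp; norm_num
  have he3 : e ≤ (δ / p) ^ 3 := by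
    have h1 : e ≤ Real.exp (-(3 * Real.log (p / δ))) := Real.exp_le_exp.2 (by linarith)
    have h2 : Real.exp (-(3 * Real.log (p / δ))) = (δ / p) ^ 3 := by
      have h3 : -(3 * Real.log (p / δ)) = Real.log ((δ / p) ^ 3) := by
        rw [Real.log_pow, ← inv_div, Real.log_inv]; push_cast; ring
      rw [h3, Real.exp_log (by positivity)]
    linarith
  have hpe : p * e ≤ δ ^ 3 := by
    calc p * e ≤ p * (δ / p) ^ 3 := mul_le_mul_of_nonneg_left he3 hp0.le
      _ = δ ^ 3 / p ^ 2 := by field_simp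
      _ ≤ δ ^ 3 := div_le_self (by positivity) (one_le_pow₀ hp1)
  have hδ3 : 6 * δ ^ 3 ≤ δ := by nlinarith [mul_pos hδ0 hδ0]
  have hP : 2 * p * Real.exp (-(1 / (320 * η))) ≤ 2 * δ ^ 3 * e := by
    rw [hsplit]
    calc 2 * p * (e * e) = 2 * (p * e) * e := by ring
      _ ≤ 2 * δ ^ 3 * e := by gcongr
  have hxe : e ≤ 2 / x ^ 2 := by
    have h1 := Real.quadratic_le_exp_of_nonneg hx0.le
    rw [he, Real.exp_neg, inv_eq_one_div, div_le_div_iff₀ (Real.exp_pos _) (by positivity)]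
    nlinarith
  have hx2 : 2 / x ^ 2 = 819200 * η ^ 2 := by rw [hx]; field_simp; norm_num
  have hδ30 : 0 < δ ^ 3 := by positivity
  constructor
  · nlinarith
  · nlinarith

/-- `log n / log log n ≥ 1`; the condition `n ≥ 3` makes `log log n` positive. -/
lemma one_le_log_div_loglog {n : ℕ} (hn : 3 ≤ n) :
    1 ≤ Real.log n / Real.log (Real.log n) := by
  have h1 : 1 < Real.log n := by
    rw [Real.lt_log_iff_exp_lt (by positivity)]
    have : (3 : ℝ) ≤ n := by exact_mod_cast hn
    linarith [Real.exp_one_lt_d9]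
  rw [one_le_div (Real.log_pos h1)]
  linarith [Real.log_le_sub_one_of_pos (by linarith : 0 < Real.log n)]

/-- Normalising by the probability `Q` of the good event costs only a multiple of `1 - Q`. -/
lemma normalise_bound {V Δ Q K e ηρ : ℝ} (hQ : 1 / 2 ≤ Q) (hQ1 : Q ≤ 1) (hΔ0 : 0 ≤ Δ)
    (hΔ : Δ ≤ ηρ) (hV : |V - Δ| ≤ K) (he : 1 - Q ≤ e) :
    |Q⁻¹ * V - Δ| ≤ 2 * K + 2 * (ηρ * e) := by
  have hQ0 : 0 < Q := by linarith
  have e1 : Q⁻¹ * V - Δ = Q⁻¹ * ((V - Δ) + Δ * (1 - Q)) := by field_simp; ring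
  have hQi : Q⁻¹ ≤ 2 := by rw [inv_le_comm₀ hQ0 (by norm_num)]; linarith
  have h2 : Δ * (1 - Q) ≤ ηρ * e := mul_le_mul hΔ he (by linarith) (by linarith)
  have h3 : 0 ≤ Δ * (1 - Q) := mul_nonneg hΔ0 (by linarith)
  rw [e1, abs_mul, abs_of_pos (inv_pos.2 hQ0)]
  have h4 : |V - Δ + Δ * (1 - Q)| ≤ K + ηρ * e := by
    refine (abs_add_le _ _).trans (add_le_add hV ?_)
    rwa [abs_of_nonneg h3]
  calc _ ≤ 2 * (K + ηρ * e) := mul_le_mul hQi h4 (abs_nonneg _) (by norm_num)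
    _ = _ := by ring

/-- The explicit error terms, all of order `η ^ (3 / 2)`, collected into a single constant. -/
lemma collect_errors {η P ρ : ℝ} (hη0 : 0 < η) (hη : η ≤ 1 / 2000) (hP0 : 0 ≤ P)
    (hP : P ≤ 819200 * η ^ 2) (hρ : 0 ≤ ρ) :
    2 * ((320000 * (2 * η * Real.sqrt (2 * η)) + 600 * P) * ρ + 5 * η ^ 2 * ρ) +
      2 * (η * ρ * (3 * P)) ≤ (10 ^ 10 * (η * Real.sqrt η)) * ρ := by
  set w := Real.sqrt η with hw
  have hw0 : 0 < w := Real.sqrt_pos.2 hη0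
  have hηw : η = w ^ 2 := (Real.sq_sqrt hη0.le).symm
  have h2η : Real.sqrt (2 * η) ≤ 2 * w := by
    rw [Real.sqrt_le_left (by positivity)]
    nlinarith
  have hw1 : w ≤ 1 := Real.sqrt_le_one.2 (by linarith)
  have hη2 : η ^ 2 ≤ η * w := by
    rw [sq]
    refine mul_le_mul_of_nonneg_left ?_ hη0.le
    rw [hηw, sq]
    exact mul_le_of_le_one_left hw0.le hw1
  have h1 : 2 * η * Real.sqrt (2 * η) ≤ 4 * (η * w) := by
    calc 2 * η * Real.sqrt (2 * η) ≤ 2 * η * (2 * w) :=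
          mul_le_mul_of_nonneg_left h2η (by linarith)
      _ = _ := by ring
  have h3 : η * P ≤ P := mul_le_of_le_one_left hP0 (by linarith)
  have h4 : 2 * (320000 * (2 * η * Real.sqrt (2 * η)) + 600 * P + 5 * η ^ 2 + 3 * (η * P)) ≤
      10 ^ 10 * (η * w) := by
    have : 0 < η * w := by positivity
    linarith
  calc _ = 2 * (320000 * (2 * η * Real.sqrt (2 * η)) + 600 * P + 5 * η ^ 2 + 3 * (η * P)) * ρ := by
        ring
    _ ≤ _ := mul_le_mul_of_nonneg_right h4 hρ

end constants

/-- **Variance of debiased subsampled OLS** (Theorem 4.4, variance part): there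
are absolute constants `C, C' > 0` such that, under the row-norm condition with
exponent `α`, for `0 < δ ≤ n^{−(3+α)}` and `m ≥ C θ_max(X) p log(p/δ)`, there
is an event `ζ` of probability at least `1 − δ` on which the debiased sketched
Gram matrices are invertible and `|Var_ζ(β̌) − Δ(X)| ≤ ε ‖r‖²` with
`ε = C' (log n/log log n) √(θ_max(X)³ p³/m³)`. -/
theorem debiased_subsampled_ols_variance :
    ∃ C C' : ℝ, 0 < C ∧ 0 < C' ∧
      ∀ (n p m : ℕ) (X : Matrix (Fin n) (Fin p) ℝ) (y : Fin n → ℝ)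
        (π : Fin n → ℝ) (α : ℝ),
        1 ≤ p → p ≤ n → 3 ≤ n →
        IsUnit (Xᵀ * X).det →
        0 < α →
        (∀ i, X i ≠ 0 → (n : ℝ) ^ (-α) ≤ (X i ⬝ᵥ X i) / frobNorm X ^ 2) →
        (∀ i, 0 < π i) → (∑ i, π i = 1) →
        (∀ i, lev X i < m * π i) →
        ∀ δ : ℝ, 0 < δ → δ ≤ (n : ℝ) ^ (-(3 + α)) →
        C * thetaMax X π * p * Real.log (p / δ) ≤ m →
        ∃ ζ : Finset (Fin m → Fin n),
          1 - δ ≤ eventProb (samplingP π) ζ ∧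
          (∀ ω ∈ ζ,
            IsUnit ((samplingSdeb X π ω * X)ᵀ * (samplingSdeb X π ω * X)).det) ∧
          |condExp (samplingP π) ζ (fun ω => lossL X y (betaCheck X y π ω)) -
              lossL X y (olsSol X y) - deltaOLS X y π m|
            ≤ (C' * (Real.log n / Real.log (Real.log n)) *
                Real.sqrt (thetaMax X π ^ 3 * p ^ 3 / m ^ 3)) *
              (olsResid X y ⬝ᵥ olsResid X y) := by
  refine ⟨1920, 10 ^ 10, by norm_num, by norm_num, ?_⟩
  intro n p m X y π α hp hpn hn hdet hα _ hπ hsum hlev δ hδ0 hδ hmC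
  obtain ⟨W, hW⟩ := exists_whitening hdet
  have hlev0 := lev_nonneg_of_whitening hW
  have hp1 : (1 : ℝ) ≤ p := by exact_mod_cast hp
  have hp0 : (0 : ℝ) < p := by linarith
  have hn3 : (3 : ℝ) ≤ n := by exact_mod_cast hn
  have hmpos : (0 : ℝ) < m := by
    have h := (hlev0 ⟨0, by omega⟩).trans_lt (hlev ⟨0, by omega⟩)
    exact pos_of_mul_pos_left h (hπ _).le
  have hm : 0 < m := by exact_mod_cast hmpos
  set T := thetaMax X π with hT
  have hlevT : ∀ i, lev X i ≤ T * p * π i := by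
    intro i
    have h : lev X i / (p * π i) ≤ T :=
      le_ciSup (f := fun i => lev X i / (p * π i)) (Set.finite_range _).bddAbove i
    rw [div_le_iff₀ (mul_pos hp0 (hπ i))] at h
    linarith
  have hT1 : 1 ≤ T := by
    have h : ∑ i, lev X i ≤ ∑ i, T * p * π i := Finset.sum_le_sum fun i _ => hlevT i
    rw [sum_lev hW, ← Finset.mul_sum, hsum] at h
    by_contra hlt
    push Not at hlt
    nlinarith
  have hTp : 1 ≤ T * p := by nlinarith
  set η := T * p / m with hηdef
  have hη0 : 0 < η := by positivity
  have hlevη : ∀ i, lev X i ≤ η * (m * π i) := by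
    intro i
    refine (hlevT i).trans_eq ?_
    rw [hηdef]; field_simp
  have hmη : 1 / (m : ℝ) ≤ η := div_le_div_of_nonneg_right hTp hmpos.le
  have hδ27 : δ ≤ 1 / 27 := by
    refine hδ.trans ?_
    have h1 : (n : ℝ) ^ (-(3 + α)) ≤ (n : ℝ) ^ (-(3 : ℝ)) :=
      Real.rpow_le_rpow_of_exponent_le (by linarith) (by linarith)
    have h2 : (n : ℝ) ^ (-(3 : ℝ)) = ((n : ℝ) ^ 3)⁻¹ := by
      rw [Real.rpow_neg (by linarith)]; norm_cast
    have h3 : ((n : ℝ) ^ 3)⁻¹ ≤ ((3 : ℝ) ^ 3)⁻¹ :=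
      inv_anti₀ (by norm_num) (pow_le_pow_left₀ (by norm_num) hn3 3)
    have h4 : ((3 : ℝ) ^ 3)⁻¹ = 1 / 27 := by norm_num
    linarith
  have hL3 : 3 ≤ Real.log (p / δ) := by
    rw [Real.le_log_iff_exp_le (by positivity), le_div_iff₀ hδ0]
    have h1 : Real.exp 3 ≤ 27 := by
      have : Real.exp 3 = Real.exp 1 ^ 3 := by rw [← Real.exp_nat_mul]; norm_num
      rw [this]
      calc Real.exp 1 ^ 3 ≤ 3 ^ 3 :=
            pow_le_pow_left₀ (Real.exp_pos _).le (by linarith [Real.exp_one_lt_d9]) 3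
        _ = 27 := by norm_num
    nlinarith [Real.exp_pos 3]
  have hηL : 1920 * η * Real.log (p / δ) ≤ 1 := by
    have : 1920 * η * Real.log (p / δ) = 1920 * T * p * Real.log (p / δ) / m := by
      rw [hηdef]; ring
    rw [this, div_le_one hmpos]; exact hmC
  have hη : η ≤ 1 / 2000 := by nlinarith
  have hm1000 : 1000 ≤ m := by
    have h : 1 / (m : ℝ) ≤ 1 / 2000 := hmη.trans hη
    rw [div_le_div_iff₀ hmpos (by norm_num)] at h
    have : (1000 : ℝ) ≤ m := by linarith
    exact_mod_cast this
  set a : Fin n → Fin p → ℝ := fun i => dwt m X π i • wrow X W i with ha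
  set z : Fin n → ℝ := fun i => dwt m X π i * olsResid X y i with hz
  set ρ := olsResid X y ⬝ᵥ olsResid X y with hρ
  have hρ0 : 0 ≤ ρ := dot_self_nonneg _
  have M : WhitenedModel m π a z (2 * η) ρ :=
    whitenedModel_of_design hdet hW hπ hsum hm hlev hη0 hη hlevη hmη y
  -- the moment order in the tail bound: the largest integer allowed by `q ε ≤ 1 / 4`
  set q := ⌊1 / (8 * η)⌋₊ with hq
  have hqle : (q : ℝ) ≤ 1 / (8 * η) := Nat.floor_le (by positivity)
  have hqge : 1 / (16 * η) ≤ (q : ℝ) := by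
    have h1 : 1 / (8 * η) < q + 1 := Nat.lt_floor_add_one _
    have h2 : 1 / (8 * η) = 2 * (1 / (16 * η)) := by field_simp; norm_num
    have h3 : 1 ≤ 1 / (16 * η) := by rw [le_div_iff₀ (by positivity)]; linarith
    linarith
  have hq0 : q ≠ 0 := by
    rintro h0
    rw [h0] at hqge
    have : 0 < 1 / (16 * η) := by positivity
    simp only [Nat.cast_zero] at hqge
    linarith
  have hqε : (q : ℝ) * (2 * η) ≤ 1 / 4 := by
    calc (q : ℝ) * (2 * η) ≤ 1 / (8 * η) * (2 * η) := by gcongr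
      _ = 1 / 4 := by field_simp; norm_num
  have hqm : q ≤ m := by
    have h1 : 1 / (8 * η) ≤ m := by
      rw [div_le_iff₀ (by positivity)]
      rw [div_le_iff₀ hmpos] at hmη
      nlinarith
    exact_mod_cast hqle.trans h1
  set P := 2 * p * Real.exp (-(1 / (320 * η))) with hPdef
  have hP0 : 0 ≤ P := by positivity
  have hP : ∀ I : Finset (Fin m), m ≤ 4 * I.card → expec π (fun ω => badInd a ω I) ≤ P := by
    intro I hI
    refine (expec_badInd_le hπ hsum M.norm_le M.low hm hq0 hqε hqm hI).trans ?_
    refine mul_le_mul_of_nonneg_left (Real.exp_le_exp.2 ?_) (by positivity)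
    have : 1 / (320 * η) = 1 / (16 * η) / 20 := by field_simp; norm_num
    linarith
  obtain ⟨hPδ, hPη⟩ : 3 * P ≤ δ ∧ P ≤ 819200 * η ^ 2 :=
    failure_bounds hη0 hp hδ0 hδ27 hηL
  have hblock : ∀ b, m ≤ 4 * (block m b).card := fun b =>
    (card_block_erase hm1000 b ⟨0, hm⟩).trans
      (Nat.mul_le_mul_left 4 (Finset.card_le_card (Finset.erase_subset _ _)))
  have hQ : 1 - 3 * P ≤ eventProb (samplingP π) (goodEvent a : Finset (Fin m → Fin n)) :=
    eventProb_goodEvent_ge hπ hsum fun b => hP _ (hblock b)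
  have hgood : ∀ ω ∈ (goodEvent a : Finset (Fin m → Fin n)),
      LowerBdd (1 / 10) (gramOn a ω univ) := fun ω hω =>
    LowerBdd.gram_mono a ω (Finset.subset_univ _) (mem_goodEvent.1 hω 0)
  have hloss := fun ω hω => loss_betaCheck (m := m) hdet hW hπ hm hlev y ω
    (hgood ω hω)
  refine ⟨goodEvent a, by linarith, fun ω hω => (hloss ω hω).1, ?_⟩
  set Q := eventProb (samplingP π) (goodEvent a : Finset (Fin m → Fin n)) with hQdef
  have hQ2 : 1 / 2 ≤ Q := by linarith
  have hQ1 : Q ≤ 1 := by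
    have h1 : Q ≤ ∑ ω : Fin m → Fin n, samplingP π ω :=
      Finset.sum_le_sum_of_subset_of_nonneg (Finset.subset_univ _)
        fun ω _ _ => samplingP_nonneg hπ ω
    have h2 := expec_const (m := m) hsum 1
    unfold expec at h2
    simp only [mul_one] at h2
    linarith
  have hmain := M.main_estimate hP
  set f : (Fin m → Fin n) → ℝ := fun ω =>
    ((gramOn a ω univ)⁻¹ *ᵥ ∑ s, z (ω s) • a (ω s)) ⬝ᵥ
      ((gramOn a ω univ)⁻¹ *ᵥ ∑ s, z (ω s) • a (ω s)) with hf
  set V := expec π (fun ω => (∏ b : Fin 3, (1 - badInd a ω (block m b))) * f ω) with hV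
  have hcond : condExp (samplingP π) (goodEvent a)
      (fun ω : Fin m → Fin n => lossL X y (betaCheck X y π ω)) - lossL X y (olsSol X y) = Q⁻¹ * V := by
    unfold condExp
    rw [← hQdef, hV, ← sum_goodEvent π a f]
    have h1 : ∑ ω ∈ (goodEvent a : Finset (Fin m → Fin n)), samplingP π ω • lossL X y (betaCheck X y π ω) =
        Q * lossL X y (olsSol X y) + ∑ ω ∈ goodEvent a, samplingP π ω * f ω := by
      rw [hQdef, eventProb, Finset.sum_mul, ← Finset.sum_add_distrib]
      refine Finset.sum_congr rfl fun ω hω => ?_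
      rw [(hloss ω hω).2, smul_eq_mul, mul_add]
    rw [h1, smul_eq_mul]
    have : Q ≠ 0 := by linarith
    field_simp
    ring
  rw [hcond]
  obtain ⟨hΔ0, hΔ⟩ := deltaOLS_bounds hlev0 hlev hlevη y
  have hmd := main_term_sub_deltaOLS hW hlev hη0 hη hlevη y
  have hVΔ : |V - deltaOLS X y π m| ≤
      (320000 * (2 * η * Real.sqrt (2 * η)) + 600 * P) * ρ + 5 * η ^ 2 * ρ :=
    (abs_sub_le _ _ _).trans (add_le_add hmain hmd)
  refine (normalise_bound (e := 3 * P) hQ2 hQ1 hΔ0 hΔ hVΔ (by linarith)).trans ?_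
  have hsqrt : Real.sqrt (T ^ 3 * p ^ 3 / m ^ 3) = η * Real.sqrt η := by
    have : T ^ 3 * p ^ 3 / m ^ 3 = η ^ 2 * η := by rw [hηdef]; ring
    rw [this, Real.sqrt_mul (sq_nonneg _), Real.sqrt_sq hη0.le]
  rw [hsqrt]
  have hstep := collect_errors hη0 hη hP0 hPη hρ0
  refine hstep.trans (mul_le_mul_of_nonneg_right ?_ hρ0)
  refine mul_le_mul_of_nonneg_right ?_ (by positivity)
  exact le_mul_of_one_le_right (by norm_num) (one_le_log_div_loglog hn)

end
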